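/- arXiv:1011.1835 — 15 statements merged into one kernel-verified Lean document; each statement's English description precedes it below -/
import Mathlib

section
/- Let a₁,…,aₙ be distinct reals and b₁,…,bₙ reals, A = diag(a₁,…,aₙ), B = diag(b₁,…,bₙ), and let 𝔸 be the linear operator on skew-symmetric n×n real matrices defined by (𝔸ξ)_{ij} = ((b_i−b_j)/(a_i−a_j))·ξ_{ij}. Suppose differentiable curves X(t), P(t) of n×r real matrices satisfy the Manakov submersion geodesic equations Ẋ = 𝔸(Φ)·X and Ṗ = 𝔸(Φ)·P, where Φ = PXᵀ − XPᵀ. Then for every real λ the matrix Lax equation holds: d/dt (Φ + λA) = [𝔸(Φ) + λB, Φ + λA]. -/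
open Matrix

/-- The Manakov-type submersion geodesic flow on the Stiefel variety
implies the matrix Lax equation d/dt (Φ + λA) = [𝔸(Φ) + λB, Φ + λA]. -/
theorem manakov_lax_pair {n r : ℕ} (a b : Fin n → ℝ) (ha : Function.Injective a)
    (A B : Matrix (Fin n) (Fin n) ℝ)
    (hA : A = Matrix.diagonal a) (hB : B = Matrix.diagonal b)
    (𝔸 : Matrix (Fin n) (Fin n) ℝ → Matrix (Fin n) (Fin n) ℝ)
    (h𝔸 : ∀ ξ i j, 𝔸 ξ i j = ((b i - b j) / (a i - a j)) * ξ i j)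
    (X P : ℝ → Matrix (Fin n) (Fin r) ℝ)
    (Φ : ℝ → Matrix (Fin n) (Fin n) ℝ)
    (hΦ : ∀ t, Φ t = P t * (X t)ᵀ - X t * (P t)ᵀ)
    (hX : ∀ t i j, HasDerivAt (fun s => X s i j) ((𝔸 (Φ t) * X t) i j) t)
    (hP : ∀ t i j, HasDerivAt (fun s => P s i j) ((𝔸 (Φ t) * P t) i j) t) :
    ∀ (lam : ℝ) (t : ℝ) (i j : Fin n),
      HasDerivAt (fun s => (Φ s + lam • A) i j)
        (((𝔸 (Φ t) + lam • B) * (Φ t + lam • A)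
          - (Φ t + lam • A) * (𝔸 (Φ t) + lam • B)) i j) t := by
  intro lam t i j
  set W := 𝔸 (Φ t) with hW
  have hskew : (Φ t)ᵀ = - Φ t := by
    rw [hΦ]; simp [Matrix.transpose_sub, Matrix.transpose_mul]
  have hWs : Wᵀ = -W := by
    ext k l
    have h1 : Φ t l k = - Φ t k l := congrFun (congrFun hskew k) l
    simp only [Matrix.transpose_apply, Matrix.neg_apply, hW, h𝔸, h1]
    rw [← neg_sub (b k) (b l), ← neg_sub (a k) (a l), neg_div_neg_eq]
    ring
  have hcross : W * A - A * W + (B * Φ t - Φ t * B) = 0 := by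
    ext k l
    simp only [hA, hB, Matrix.add_apply, Matrix.sub_apply, Matrix.mul_diagonal,
      Matrix.diagonal_mul, Matrix.zero_apply, hW, h𝔸]
    by_cases hkl : k = l
    · subst hkl; simp; ring
    · have : a k - a l ≠ 0 := sub_ne_zero.mpr (fun h => hkl (ha h))
      field_simp
      ring
  have hBA : B * A = A * B := by
    rw [hA, hB, Matrix.diagonal_mul_diagonal, Matrix.diagonal_mul_diagonal]
    congr 1; ext k; ring
  have hcomm : (W + lam • B) * (Φ t + lam • A) - (Φ t + lam • A) * (W + lam • B)
      = W * Φ t - Φ t * W := by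
    have : (W + lam • B) * (Φ t + lam • A) - (Φ t + lam • A) * (W + lam • B)
      = W * Φ t - Φ t * W + lam • (W * A - A * W + (B * Φ t - Φ t * B))
        + (lam * lam) • (B * A - A * B) := by
      simp only [Matrix.add_mul, Matrix.mul_add, Matrix.smul_mul, Matrix.mul_smul, smul_smul,
        smul_add, smul_sub]
      abel
    rw [this, hcross, hBA]; simp
  have hD : W * Φ t - Φ t * W = ((W * P t) * (X t)ᵀ + P t * (W * X t)ᵀ)
      - ((W * X t) * (P t)ᵀ + X t * (W * P t)ᵀ) := by
    rw [hΦ t]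
    simp only [Matrix.transpose_mul, hWs, Matrix.mul_neg, Matrix.mul_sub, Matrix.sub_mul,
      Matrix.mul_assoc]
    abel
  have hmul : ∀ (Y Z : ℝ → Matrix (Fin n) (Fin r) ℝ) (Yd Zd : Matrix (Fin n) (Fin r) ℝ),
      (∀ i j, HasDerivAt (fun s => Y s i j) (Yd i j) t) →
      (∀ i j, HasDerivAt (fun s => Z s i j) (Zd i j) t) →
      HasDerivAt (fun s => (Y s * (Z s)ᵀ) i j) ((Yd * (Z t)ᵀ + Y t * Zdᵀ) i j) t := by
    intro Y Z Yd Zd hY hZ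
    simp only [Matrix.mul_apply, Matrix.add_apply, Matrix.transpose_apply]
    rw [← Finset.sum_add_distrib]
    exact HasDerivAt.fun_sum (fun k _ => (hY i k).mul (hZ j k))
  rw [hcomm, hD]
  have h := ((hmul P X _ _ (hP t) (hX t)).sub (hmul X P _ _ (hX t) (hP t))).add_const
    ((lam • A) i j)
  have hf : (fun s => (Φ s + lam • A) i j)
      = fun s => ((P s * (X s)ᵀ) i j - (X s * (P s)ᵀ) i j) + (lam • A) i j := by
    funext s; rw [hΦ s]; rfl
  rw [hf]
  exact h
end

section
/- Consider the Neumann system with parameter κ on the Stiefel variety: Ẋ = P − (1+2κ)XPᵀX, Ṗ = −AX − XPᵀP + (1+2κ)PXᵀP + XXᵀAX, for differentiable curves X(t), P(t) of n×r real matrices and A a real diagonal n×n matrix. If at a time t the constraints XᵀX = I_r and XᵀP + PᵀX = 0 hold, then at that time d/dt(XᵀX) = 0 and d/dt(XᵀP + PᵀX) = 0; i.e. the constraints defining the cotangent bundle of the Stiefel variety are preserved by the flow (the Lagrange multipliers are Π = 0 and Λ = XᵀAX − PᵀP). -/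
open Matrix

lemma hasDerivAt_transpose_mul {n r : ℕ} (U V : ℝ → Matrix (Fin n) (Fin r) ℝ)
    (U' V' : Matrix (Fin n) (Fin r) ℝ) (t : ℝ)
    (hU : ∀ i j, HasDerivAt (fun s => U s i j) (U' i j) t)
    (hV : ∀ i j, HasDerivAt (fun s => V s i j) (V' i j) t) (i j : Fin r) :
    HasDerivAt (fun s => ((U s)ᵀ * V s) i j) ((U'ᵀ * V t + (U t)ᵀ * V') i j) t := by
  simp only [Matrix.add_apply, Matrix.mul_apply, Matrix.transpose_apply,
    ← Finset.sum_add_distrib]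
  exact HasDerivAt.fun_sum fun k _ => (hU k i).mul (hV k j)

/-- The Neumann flow with parameter κ on n×r matrices preserves the Stiefel
cotangent bundle constraints XᵀX = I_r and XᵀP + PᵀX = 0. -/
theorem neumann_preserves_constraints {n r : ℕ} (a : Fin n → ℝ)
    (A : Matrix (Fin n) (Fin n) ℝ) (hA : A = Matrix.diagonal a)
    (κ : ℝ) (X P : ℝ → Matrix (Fin n) (Fin r) ℝ)
    (hX : ∀ t i j, HasDerivAt (fun s => X s i j)
      ((P t - (1 + 2 * κ) • (X t * (P t)ᵀ * X t)) i j) t)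
    (hP : ∀ t i j, HasDerivAt (fun s => P s i j)
      ((-(A * X t) - X t * (P t)ᵀ * P t + (1 + 2 * κ) • (P t * (X t)ᵀ * P t)
        + X t * (X t)ᵀ * A * X t) i j) t)
    (t₀ : ℝ)
    (hc1 : (X t₀)ᵀ * X t₀ = 1)
    (hc2 : (X t₀)ᵀ * P t₀ + (P t₀)ᵀ * X t₀ = 0) :
    (∀ i j, HasDerivAt (fun s => ((X s)ᵀ * X s) i j) 0 t₀) ∧
    (∀ i j, HasDerivAt (fun s => ((X s)ᵀ * P s + (P s)ᵀ * X s) i j) 0 t₀) := by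
  have h1 := hasDerivAt_transpose_mul X X _ _ t₀ (hX t₀) (hX t₀)
  have h2 := hasDerivAt_transpose_mul X P _ _ t₀ (hX t₀) (hP t₀)
  have hl : ∀ M : Matrix (Fin r) (Fin r) ℝ, (X t₀)ᵀ * (X t₀ * M) = M := fun M => by
    rw [← Matrix.mul_assoc, hc1, Matrix.one_mul]
  have hc3 : (P t₀)ᵀ * X t₀ = -((X t₀)ᵀ * P t₀) := eq_neg_of_add_eq_zero_right hc2
  have e1 : (P t₀ - (1 + 2 * κ) • (X t₀ * (P t₀)ᵀ * X t₀))ᵀ * X t₀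
      + (X t₀)ᵀ * (P t₀ - (1 + 2 * κ) • (X t₀ * (P t₀)ᵀ * X t₀)) = 0 := by
    simp only [Matrix.transpose_sub, Matrix.transpose_smul, Matrix.transpose_mul,
      Matrix.transpose_transpose, Matrix.sub_mul, Matrix.mul_sub, Matrix.smul_mul,
      Matrix.mul_smul, Matrix.mul_assoc, hl, hc1, Matrix.mul_one]
    simp only [hc3, smul_neg]
    abel
  have e2 : (P t₀ - (1 + 2 * κ) • (X t₀ * (P t₀)ᵀ * X t₀))ᵀ * P t₀
      + (X t₀)ᵀ * (-(A * X t₀) - X t₀ * (P t₀)ᵀ * P t₀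
        + (1 + 2 * κ) • (P t₀ * (X t₀)ᵀ * P t₀) + X t₀ * (X t₀)ᵀ * A * X t₀) = 0 := by
    simp only [Matrix.transpose_sub, Matrix.transpose_smul, Matrix.transpose_mul,
      Matrix.transpose_transpose, Matrix.sub_mul, Matrix.mul_sub, Matrix.mul_add,
      Matrix.mul_neg, Matrix.smul_mul, Matrix.mul_smul, Matrix.mul_assoc, hl]
    abel
  rw [e1] at h1
  rw [e2] at h2
  refine ⟨h1, fun i j => ?_⟩
  have h3 := (h2 i j).add (h2 j i)
  simp only [Matrix.zero_apply, add_zero] at h3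
  refine h3.congr_of_eventuallyEq (Filter.Eventually.of_forall fun s => ?_)
  simp [Matrix.mul_apply, mul_comm]
end

section
/- Let X(t), P(t) be differentiable curves of n×r real matrices that for all t satisfy the Stiefel constraints XᵀX = I_r and XᵀP + PᵀX = 0, and satisfy the Neumann equations with parameter κ: Ẋ = P − (1+2κ)XPᵀX, Ṗ = −AX − XPᵀP + (1+2κ)PXᵀP + XXᵀAX. Then, independently of κ, d/dt Φ = [XXᵀ, A] and d/dt (XXᵀ) = [Φ, XXᵀ], where Φ = PXᵀ − XPᵀ. -/
open Matrix

/-- Entrywise product rule for `M Nᵀ`. -/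
theorem hasDerivAt_mul_transpose_entry {n r : ℕ} (M N : ℝ → Matrix (Fin n) (Fin r) ℝ)
    (M' N' : Matrix (Fin n) (Fin r) ℝ) (t : ℝ)
    (hM : ∀ i j, HasDerivAt (fun s => M s i j) (M' i j) t)
    (hN : ∀ i j, HasDerivAt (fun s => N s i j) (N' i j) t) (i j : Fin n) :
    HasDerivAt (fun s => (M s * (N s)ᵀ) i j) ((M' * (N t)ᵀ + M t * N'ᵀ) i j) t := by
  have h := HasDerivAt.fun_sum (u := Finset.univ)
    (fun k _ => (hM i k).mul (hN j k))
  simp only [Matrix.mul_apply, Matrix.add_apply, Matrix.transpose_apply]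
  rw [← Finset.sum_add_distrib]
  exact h

/-- Along the Neumann flow with parameter κ on the Stiefel variety,
d/dt Φ = [XXᵀ, A] and d/dt (XXᵀ) = [Φ, XXᵀ], where Φ = PXᵀ − XPᵀ. -/
theorem neumann_momentum_equations {n r : ℕ} (a : Fin n → ℝ)
    (A : Matrix (Fin n) (Fin n) ℝ) (hA : A = Matrix.diagonal a)
    (κ : ℝ) (X P : ℝ → Matrix (Fin n) (Fin r) ℝ)
    (hc1 : ∀ t, (X t)ᵀ * X t = 1)
    (hc2 : ∀ t, (X t)ᵀ * P t + (P t)ᵀ * X t = 0)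
    (hX : ∀ t i j, HasDerivAt (fun s => X s i j)
      ((P t - (1 + 2 * κ) • (X t * (P t)ᵀ * X t)) i j) t)
    (hP : ∀ t i j, HasDerivAt (fun s => P s i j)
      ((-(A * X t) - X t * (P t)ᵀ * P t + (1 + 2 * κ) • (P t * (X t)ᵀ * P t)
        + X t * (X t)ᵀ * A * X t) i j) t)
    (Φ : ℝ → Matrix (Fin n) (Fin n) ℝ)
    (hΦ : ∀ t, Φ t = P t * (X t)ᵀ - X t * (P t)ᵀ) :
    (∀ t i j, HasDerivAt (fun s => Φ s i j)
      ((X t * (X t)ᵀ * A - A * (X t * (X t)ᵀ)) i j) t) ∧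
    (∀ t i j, HasDerivAt (fun s => (X s * (X s)ᵀ) i j)
      ((Φ t * (X t * (X t)ᵀ) - X t * (X t)ᵀ * Φ t) i j) t) := by
  have hAt : Aᵀ = A := by rw [hA, Matrix.diagonal_transpose]
  constructor
  · intro t i j
    have h1 := hasDerivAt_mul_transpose_entry P X _ _ t (hP t) (hX t) i j
    have h2 := hasDerivAt_mul_transpose_entry X P _ _ t (hX t) (hP t) i j
    have h := h1.sub h2
    have hf : (fun s => Φ s i j)
        = (fun s => (P s * (X s)ᵀ) i j) - (fun s => (X s * (P s)ᵀ) i j) := by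
      funext s
      rw [hΦ]
      rfl
    rw [hf]
    refine h.congr_deriv (Eq.symm ?_)
    rw [← Matrix.sub_apply]
    refine congrFun (congrFun ?_ i) j
    simp only [Matrix.transpose_add, Matrix.transpose_sub, Matrix.transpose_neg,
      Matrix.transpose_smul, Matrix.transpose_mul, Matrix.transpose_transpose, hAt,
      Matrix.add_mul, Matrix.sub_mul, Matrix.mul_add, Matrix.mul_sub, Matrix.neg_mul,
      Matrix.mul_neg, Matrix.smul_mul, Matrix.mul_smul, Matrix.mul_assoc]
    abel
  · intro t i j
    have h := hasDerivAt_mul_transpose_entry X X _ _ t (hX t) (hX t) i j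
    refine h.congr_deriv (Eq.symm ?_)
    refine congrFun (congrFun ?_ i) j
    have e1 : (P t)ᵀ * X t = -((X t)ᵀ * P t) :=
      eq_neg_of_add_eq_zero_right (hc2 t)
    have c1 : ∀ Y : Matrix (Fin r) (Fin n) ℝ, (X t)ᵀ * (X t * Y) = Y := fun Y => by
      rw [← Matrix.mul_assoc, hc1, Matrix.one_mul]
    have c2 : ∀ Y : Matrix (Fin r) (Fin n) ℝ,
        (P t)ᵀ * (X t * Y) = -((X t)ᵀ * (P t * Y)) := fun Y => by
      rw [← Matrix.mul_assoc, e1, Matrix.neg_mul, Matrix.mul_assoc]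
    simp only [hΦ, Matrix.transpose_sub,
      Matrix.transpose_smul, Matrix.transpose_mul, Matrix.transpose_transpose,
      Matrix.sub_mul, Matrix.mul_sub, Matrix.neg_mul,
      Matrix.mul_neg, Matrix.smul_mul, Matrix.mul_smul, Matrix.mul_assoc, c1, c2, smul_neg]
    abel
end

section
/- Let X(t), P(t) be differentiable curves of n×r real matrices satisfying for all t the Stiefel constraints XᵀX = I_r, XᵀP + PᵀX = 0 and the Neumann equations with parameter κ: Ẋ = P − (1+2κ)XPᵀX, Ṗ = −AX − XPᵀP + (1+2κ)PXᵀP + XXᵀAX. Then for every real λ the n×n matrix Lax representation holds: d/dt L(λ) = [A(λ), L(λ)], where L(λ) = λΦ + XXᵀ − λ²A and A(λ) = Φ − λA, with Φ = PXᵀ − XPᵀ. -/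
open Matrix

theorem hasDerivAt_mul_entry {l m n : ℕ} {M : ℝ → Matrix (Fin l) (Fin m) ℝ}
    {N : ℝ → Matrix (Fin m) (Fin n) ℝ} {M' : Matrix (Fin l) (Fin m) ℝ}
    {N' : Matrix (Fin m) (Fin n) ℝ} {t : ℝ}
    (hM : ∀ i j, HasDerivAt (fun s => M s i j) (M' i j) t)
    (hN : ∀ i j, HasDerivAt (fun s => N s i j) (N' i j) t) (i : Fin l) (j : Fin n) :
    HasDerivAt (fun s => (M s * N s) i j) ((M' * N t + M t * N') i j) t := by
  simp only [Matrix.mul_apply, Matrix.add_apply, ← Finset.sum_add_distrib]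
  exact HasDerivAt.fun_sum fun k _ => (hM i k).mul (hN k j)

/-- The Neumann flow with parameter κ on the Stiefel variety implies the
n×n Lax equation d/dt L(λ) = [A(λ), L(λ)] with L(λ) = λΦ + XXᵀ − λ²A, A(λ) = Φ − λA. -/
theorem neumann_big_lax_pair {n r : ℕ} (a : Fin n → ℝ)
    (A : Matrix (Fin n) (Fin n) ℝ) (hA : A = Matrix.diagonal a)
    (κ : ℝ) (X P : ℝ → Matrix (Fin n) (Fin r) ℝ)
    (hc1 : ∀ t, (X t)ᵀ * X t = 1)
    (hc2 : ∀ t, (X t)ᵀ * P t + (P t)ᵀ * X t = 0)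
    (hX : ∀ t i j, HasDerivAt (fun s => X s i j)
      ((P t - (1 + 2 * κ) • (X t * (P t)ᵀ * X t)) i j) t)
    (hP : ∀ t i j, HasDerivAt (fun s => P s i j)
      ((-(A * X t) - X t * (P t)ᵀ * P t + (1 + 2 * κ) • (P t * (X t)ᵀ * P t)
        + X t * (X t)ᵀ * A * X t) i j) t)
    (Φ : ℝ → Matrix (Fin n) (Fin n) ℝ)
    (hΦ : ∀ t, Φ t = P t * (X t)ᵀ - X t * (P t)ᵀ) :
    ∀ (lam : ℝ) (t : ℝ) (i j : Fin n),
      HasDerivAt (fun s => (lam • Φ s + X s * (X s)ᵀ - lam ^ 2 • A) i j)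
        (((Φ t - lam • A) * (lam • Φ t + X t * (X t)ᵀ - lam ^ 2 • A)
          - (lam • Φ t + X t * (X t)ᵀ - lam ^ 2 • A) * (Φ t - lam • A)) i j) t := by
  intro lam t i j
  have hAT : Aᵀ = A := by rw [hA, Matrix.diagonal_transpose]
  have hXt := fun i j => hX t j i
  have hPt := fun i j => hP t j i
  have e1 := hasDerivAt_mul_entry (M := P) (N := fun s => (X s)ᵀ) (hP t)
    (N' := (P t - (1 + 2 * κ) • (X t * (P t)ᵀ * X t))ᵀ) hXt i j
  have e2 := hasDerivAt_mul_entry (M := X) (N := fun s => (P s)ᵀ) (hX t)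
    (N' := (-(A * X t) - X t * (P t)ᵀ * P t + (1 + 2 * κ) • (P t * (X t)ᵀ * P t)
        + X t * (X t)ᵀ * A * X t)ᵀ) hPt i j
  have e3 := hasDerivAt_mul_entry (M := X) (N := fun s => (X s)ᵀ) (hX t)
    (N' := (P t - (1 + 2 * κ) • (X t * (P t)ᵀ * X t))ᵀ) hXt i j
  have e := (((e1.sub e2).const_mul lam).add e3).sub_const ((lam ^ 2 • A) i j)
  have hfun : (fun s => (lam • Φ s + X s * (X s)ᵀ - lam ^ 2 • A) i j) =
      fun s => lam * ((P s * (X s)ᵀ) i j - (X s * (P s)ᵀ) i j) + (X s * (X s)ᵀ) i j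
        - (lam ^ 2 • A) i j := by
    funext s
    simp [hΦ]
  rw [hfun]
  refine HasDerivAt.congr_deriv e ?_
  rw [← Matrix.sub_apply, ← smul_eq_mul, ← Matrix.smul_apply, ← Matrix.add_apply]
  refine congrArg (fun M : Matrix (Fin n) (Fin n) ℝ => M i j) ?_
  rw [hΦ t]
  have h1 := hc1 t
  have h2 : (X t)ᵀ * P t = -((P t)ᵀ * X t) := eq_neg_of_add_eq_zero_left (hc2 t)
  generalize X t = x at *
  generalize P t = p at *
  have h1' : ∀ y : Matrix (Fin r) (Fin n) ℝ, xᵀ * (x * y) = y := fun y => by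
    rw [← Matrix.mul_assoc, h1, Matrix.one_mul]
  have h2' : ∀ y : Matrix (Fin r) (Fin n) ℝ, xᵀ * (p * y) = -(pᵀ * (x * y)) := fun y => by
    rw [← Matrix.mul_assoc, h2, Matrix.neg_mul, Matrix.mul_assoc]
  simp only [Matrix.transpose_sub, Matrix.transpose_add, Matrix.transpose_neg,
    Matrix.transpose_smul, Matrix.transpose_mul, Matrix.transpose_transpose, hAT,
    Matrix.mul_sub, Matrix.sub_mul, Matrix.mul_add, Matrix.add_mul, Matrix.mul_neg,
    Matrix.neg_mul, Matrix.mul_smul, Matrix.smul_mul, Matrix.mul_assoc, h1', h2', h2]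
  module
end

section
/- Let X(t), P(t) be differentiable curves of n×r real matrices satisfying for all t the Stiefel constraints XᵀX = I_r, XᵀP + PᵀX = 0 and the Neumann equations with parameter κ: Ẋ = P − (1+2κ)XPᵀX, Ṗ = −AX − XPᵀP + (1+2κ)PXᵀP + XXᵀAX. Then for every real λ and every natural number k, the function t ↦ tr((λ(P(t)X(t)ᵀ − X(t)P(t)ᵀ) + X(t)X(t)ᵀ − λ²A)ᵏ) is constant in t, i.e. its derivative vanishes identically. -/
open Matrix

theorem ent_mul {l m p : ℕ} {F : ℝ → Matrix (Fin l) (Fin m) ℝ} {G : ℝ → Matrix (Fin m) (Fin p) ℝ}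
    {F' : Matrix (Fin l) (Fin m) ℝ} {G' : Matrix (Fin m) (Fin p) ℝ} {t : ℝ}
    (hF : ∀ i j, HasDerivAt (fun s => F s i j) (F' i j) t)
    (hG : ∀ i j, HasDerivAt (fun s => G s i j) (G' i j) t) :
    ∀ i j, HasDerivAt (fun s => (F s * G s) i j) ((F' * G t + F t * G') i j) t := by
  intro i j
  simp only [Matrix.add_apply, Matrix.mul_apply, ← Finset.sum_add_distrib]
  exact HasDerivAt.fun_sum fun k _ => (hF i k).mul (hG k j)

theorem ent_pow {n : ℕ} {L : ℝ → Matrix (Fin n) (Fin n) ℝ} {B : Matrix (Fin n) (Fin n) ℝ} {t : ℝ}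
    (hL : ∀ i j, HasDerivAt (fun s => L s i j) ((B * L t - L t * B) i j) t) (k : ℕ) :
    ∀ i j, HasDerivAt (fun s => (L s ^ k) i j) ((B * L t ^ k - L t ^ k * B) i j) t := by
  induction k with
  | zero =>
    intro i j
    simpa using hasDerivAt_const t ((1 : Matrix (Fin n) (Fin n) ℝ) i j)
  | succ k ih =>
    intro i j
    have h := ent_mul ih hL i j
    simp only [pow_succ]
    refine HasDerivAt.congr_deriv h (congrFun (congrFun ?_ i) j)
    simp only [Matrix.sub_mul, Matrix.mul_sub, Matrix.mul_assoc]
    abel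

theorem lax_alg {n r : ℕ} (A : Matrix (Fin n) (Fin n) ℝ) (hA : Aᵀ = A) (c lam : ℝ)
    (X P : Matrix (Fin n) (Fin r) ℝ) (h1 : Xᵀ * X = 1) (h2 : Xᵀ * P + Pᵀ * X = 0)
    (X' P' : Matrix (Fin n) (Fin r) ℝ) (hX' : X' = P - c • (X * Pᵀ * X))
    (hP' : P' = -(A * X) - X * Pᵀ * P + c • (P * Xᵀ * P) + X * Xᵀ * A * X) :
    lam • ((P' * Xᵀ + P * X'ᵀ) - (X' * Pᵀ + X * P'ᵀ)) + (X' * Xᵀ + X * X'ᵀ)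
      = ((P * Xᵀ - X * Pᵀ) - lam • A) * (lam • (P * Xᵀ - X * Pᵀ) + X * Xᵀ - lam ^ 2 • A)
       - (lam • (P * Xᵀ - X * Pᵀ) + X * Xᵀ - lam ^ 2 • A) * ((P * Xᵀ - X * Pᵀ) - lam • A) := by
  have h3 : Pᵀ * X = -(Xᵀ * P) := by
    rw [eq_neg_iff_add_eq_zero, add_comm]; exact h2
  have h1' : ∀ Z : Matrix (Fin r) (Fin n) ℝ, Xᵀ * (X * Z) = Z := by
    intro Z; rw [← Matrix.mul_assoc, h1, Matrix.one_mul]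
  have h3' : ∀ Z : Matrix (Fin r) (Fin n) ℝ, Pᵀ * (X * Z) = -(Xᵀ * (P * Z)) := by
    intro Z; rw [← Matrix.mul_assoc, h3, Matrix.neg_mul, Matrix.mul_assoc]
  have hS : X' * Xᵀ + X * X'ᵀ = P * Xᵀ + X * Pᵀ := by
    subst hX'
    simp only [transpose_sub, transpose_smul, transpose_mul, transpose_transpose, Matrix.sub_mul,
      Matrix.mul_sub, Matrix.smul_mul, Matrix.mul_smul, Matrix.mul_assoc, h3', Matrix.mul_neg]
    module
  have hF : (P' * Xᵀ + P * X'ᵀ) - (X' * Pᵀ + X * P'ᵀ) = X * Xᵀ * A - A * (X * Xᵀ) := by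
    subst hX' hP'
    simp only [transpose_sub, transpose_add, transpose_neg, transpose_smul, transpose_mul,
      transpose_transpose, Matrix.sub_mul, Matrix.add_mul, Matrix.mul_add, Matrix.neg_mul,
      Matrix.mul_sub, Matrix.smul_mul, Matrix.mul_smul, Matrix.mul_assoc, h3', Matrix.mul_neg, hA]
    module
  have hC : P * Xᵀ + X * Pᵀ
      = (P * Xᵀ - X * Pᵀ) * (X * Xᵀ) - (X * Xᵀ) * (P * Xᵀ - X * Pᵀ) := by
    simp only [Matrix.sub_mul, Matrix.mul_sub, Matrix.mul_assoc, h3', h1', Matrix.mul_neg]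
    module
  rw [hF, hS, hC]
  generalize P * Xᵀ - X * Pᵀ = F
  generalize X * Xᵀ = S
  simp only [Matrix.sub_mul, Matrix.add_mul, Matrix.mul_add, Matrix.mul_sub, Matrix.smul_mul,
    Matrix.mul_smul]
  module

/-- Along the Neumann flow with parameter κ on the Stiefel variety,
the traces tr((λΦ + XXᵀ − λ²A)ᵏ) are first integrals: their time derivative vanishes. -/
theorem neumann_trace_integrals {n r : ℕ} (a : Fin n → ℝ)
    (A : Matrix (Fin n) (Fin n) ℝ) (hA : A = Matrix.diagonal a)
    (κ : ℝ) (X P : ℝ → Matrix (Fin n) (Fin r) ℝ)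
    (hc1 : ∀ t, (X t)ᵀ * X t = 1)
    (hc2 : ∀ t, (X t)ᵀ * P t + (P t)ᵀ * X t = 0)
    (hX : ∀ t i j, HasDerivAt (fun s => X s i j)
      ((P t - (1 + 2 * κ) • (X t * (P t)ᵀ * X t)) i j) t)
    (hP : ∀ t i j, HasDerivAt (fun s => P s i j)
      ((-(A * X t) - X t * (P t)ᵀ * P t + (1 + 2 * κ) • (P t * (X t)ᵀ * P t)
        + X t * (X t)ᵀ * A * X t) i j) t) :
    ∀ (lam : ℝ) (k : ℕ) (t : ℝ),
      HasDerivAt (fun s => Matrix.trace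
        ((lam • (P s * (X s)ᵀ - X s * (P s)ᵀ) + X s * (X s)ᵀ - lam ^ 2 • A) ^ k)) 0 t := by
  intro lam k t
  have hA' : Aᵀ = A := by rw [hA, Matrix.diagonal_transpose]
  obtain ⟨X', hX'⟩ : ∃ X', X' = P t - (1 + 2 * κ) • (X t * (P t)ᵀ * X t) := ⟨_, rfl⟩
  obtain ⟨P', hP'⟩ : ∃ P', P' = -(A * X t) - X t * (P t)ᵀ * P t
    + (1 + 2 * κ) • (P t * (X t)ᵀ * P t) + X t * (X t)ᵀ * A * X t := ⟨_, rfl⟩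
  have dX : ∀ i j, HasDerivAt (fun s => X s i j) (X' i j) t := by
    rw [hX']; exact hX t
  have dP : ∀ i j, HasDerivAt (fun s => P s i j) (P' i j) t := by
    rw [hP']; exact hP t
  have dXT : ∀ i j, HasDerivAt (fun s => (X s)ᵀ i j) (X'ᵀ i j) t := fun i j => dX j i
  have dPT : ∀ i j, HasDerivAt (fun s => (P s)ᵀ i j) (P'ᵀ i j) t := fun i j => dP j i
  have alg := lax_alg A hA' (1 + 2 * κ) lam (X t) (P t) (hc1 t) (hc2 t) X' P' hX' hP'
  have hL : ∀ i j, HasDerivAt (fun s =>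
      (lam • (P s * (X s)ᵀ - X s * (P s)ᵀ) + X s * (X s)ᵀ - lam ^ 2 • A) i j)
      ((((P t * (X t)ᵀ - X t * (P t)ᵀ) - lam • A)
          * (lam • (P t * (X t)ᵀ - X t * (P t)ᵀ) + X t * (X t)ᵀ - lam ^ 2 • A)
       - (lam • (P t * (X t)ᵀ - X t * (P t)ᵀ) + X t * (X t)ᵀ - lam ^ 2 • A)
          * ((P t * (X t)ᵀ - X t * (P t)ᵀ) - lam • A)) i j) t := by
    intro i j
    have h := ((((ent_mul dP dXT i j).sub (ent_mul dX dPT i j)).const_mul lam).add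
      (ent_mul dX dXT i j)).sub_const ((lam ^ 2 • A) i j)
    have e := congrFun (congrFun alg i) j
    refine HasDerivAt.congr_deriv h (Eq.trans ?_ e)
    simp only [Matrix.add_apply, Matrix.sub_apply, Matrix.smul_apply, smul_eq_mul]
  have hk := ent_pow (L := fun s => lam • (P s * (X s)ᵀ - X s * (P s)ᵀ) + X s * (X s)ᵀ - lam ^ 2 • A) hL k
  have hs := HasDerivAt.fun_sum (u := Finset.univ) fun i _ => hk i i
  refine HasDerivAt.congr_deriv hs ?_
  change Matrix.trace (_ - _) = 0
  rw [Matrix.trace_sub, Matrix.trace_mul_comm, sub_self]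
end

section
/- Let X(t), P(t) be differentiable curves of n×r real matrices satisfying for all t the Stiefel constraints XᵀX = I_r, XᵀP + PᵀX = 0 and the Neumann system with the Euclidean metric: Ẋ = P, Ṗ = −AX − XPᵀP + XXᵀAX. Then for every real λ such that λI_n − A is invertible, the 2r×2r block matrices L*(λ) = [[−Xᵀ(λI_n−A)⁻¹P, −Xᵀ(λI_n−A)⁻¹X],[I_r + Pᵀ(λI_n−A)⁻¹P, Pᵀ(λI_n−A)⁻¹X]] and A*(λ) = [[0, I_r],[Λ − λI_r, 0]] with Λ = XᵀAX − PᵀP satisfy the dual Lax equation d/dt L*(λ) = [L*(λ), A*(λ)]. -/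
open Matrix

/-- Entrywise product rule for `Uᵀ R V` with `R` constant. -/
theorem hasDerivAt_transpose_mul_mul {n r : ℕ} (R : Matrix (Fin n) (Fin n) ℝ)
    (U V : ℝ → Matrix (Fin n) (Fin r) ℝ) (U' V' : Matrix (Fin n) (Fin r) ℝ) (t : ℝ)
    (hU : ∀ i j, HasDerivAt (fun s => U s i j) (U' i j) t)
    (hV : ∀ i j, HasDerivAt (fun s => V s i j) (V' i j) t) (i j : Fin r) :
    HasDerivAt (fun s => ((U s)ᵀ * R * V s) i j)
      ((U'ᵀ * R * V t + (U t)ᵀ * R * V') i j) t := by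
  have h : HasDerivAt (fun s => ∑ k, (∑ l, U s l i * R l k) * V s k j)
      (∑ k, ((∑ l, U' l i * R l k) * V t k j + (∑ l, U t l i * R l k) * V' k j)) t := by
    refine HasDerivAt.fun_sum fun k _ => ?_
    refine HasDerivAt.fun_mul ?_ (hV k j)
    exact HasDerivAt.fun_sum fun l _ => (hU l i).mul_const _
  simpa only [Matrix.mul_apply, Matrix.add_apply, Matrix.transpose_apply,
    Finset.sum_add_distrib] using h

/-- The Neumann system with the Euclidean metric on the Stiefel variety
implies the dual 2r×2r Lax equation d/dt L*(λ) = [L*(λ), A*(λ)]. -/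
theorem neumann_euclidean_dual_lax {n r : ℕ} (a : Fin n → ℝ)
    (A : Matrix (Fin n) (Fin n) ℝ) (hA : A = Matrix.diagonal a)
    (X P : ℝ → Matrix (Fin n) (Fin r) ℝ)
    (hc1 : ∀ t, (X t)ᵀ * X t = 1)
    (hc2 : ∀ t, (X t)ᵀ * P t + (P t)ᵀ * X t = 0)
    (hX : ∀ t i j, HasDerivAt (fun s => X s i j) (P t i j) t)
    (hP : ∀ t i j, HasDerivAt (fun s => P s i j)
      ((-(A * X t) - X t * (P t)ᵀ * P t + X t * (X t)ᵀ * A * X t) i j) t)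
    (lam : ℝ)
    (h1 : IsUnit (lam • (1 : Matrix (Fin n) (Fin n) ℝ) - A))
    (Lstar Astar : ℝ → Matrix (Fin r ⊕ Fin r) (Fin r ⊕ Fin r) ℝ)
    (hL : ∀ t, Lstar t = Matrix.fromBlocks
      (-((X t)ᵀ * (lam • 1 - A)⁻¹ * P t)) (-((X t)ᵀ * (lam • 1 - A)⁻¹ * X t))
      (1 + (P t)ᵀ * (lam • 1 - A)⁻¹ * P t) ((P t)ᵀ * (lam • 1 - A)⁻¹ * X t))
    (hAst : ∀ t, Astar t = Matrix.fromBlocks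
      0 1 (((X t)ᵀ * A * X t - (P t)ᵀ * P t) - lam • 1) 0) :
    ∀ t i j, HasDerivAt (fun s => Lstar s i j)
      ((Lstar t * Astar t - Astar t * Lstar t) i j) t := by
  intro t
  have hAT : Aᵀ = A := by rw [hA, Matrix.diagonal_transpose]
  set R := (lam • (1 : Matrix (Fin n) (Fin n) ℝ) - A)⁻¹ with hR
  have hdet := (Matrix.isUnit_iff_isUnit_det _).1 h1
  have hRA : R * A = lam • R - 1 := by
    have h := Matrix.nonsing_inv_mul _ hdet
    rw [← hR, mul_sub, mul_smul_comm, mul_one] at h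
    rw [← h]; abel
  have hAR : A * R = lam • R - 1 := by
    have h := Matrix.mul_nonsing_inv _ hdet
    rw [← hR, sub_mul, smul_mul_assoc, one_mul] at h
    rw [← h]; abel
  have hc1 := hc1 t
  have hc2 := hc2 t
  obtain ⟨Lam, hLam⟩ : ∃ Lam, Lam = (X t)ᵀ * A * X t - (P t)ᵀ * P t := ⟨_, rfl⟩
  have hLT : Lamᵀ = Lam := by
    rw [hLam]; simp [Matrix.transpose_mul, hAT, Matrix.mul_assoc]
  have hP' : ∀ i j, HasDerivAt (fun s => P s i j) ((X t * Lam - A * X t) i j) t := by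
    intro i j
    have hE : X t * Lam - A * X t
        = -(A * X t) - X t * (P t)ᵀ * P t + X t * (X t)ᵀ * A * X t := by
      rw [hLam]
      simp only [Matrix.mul_sub, Matrix.mul_assoc]
      abel
    rw [hE]
    exact hP t i j
  have hT : (X t * Lam - A * X t)ᵀ = Lam * (X t)ᵀ - (X t)ᵀ * A := by
    simp [Matrix.transpose_mul, hAT, hLT]
  have e1 : ∀ Q : Matrix (Fin n) (Fin r) ℝ, Qᵀ * R * (X t * Lam - A * X t)
      = Qᵀ * R * X t * Lam - lam • (Qᵀ * R * X t) + Qᵀ * X t := by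
    intro Q
    have : Qᵀ * R * (A * X t) = Qᵀ * (R * A) * X t := by simp only [Matrix.mul_assoc]
    rw [Matrix.mul_sub, this, hRA]
    simp only [Matrix.mul_sub, Matrix.sub_mul, Matrix.mul_smul, Matrix.smul_mul, Matrix.mul_one,
      Matrix.mul_assoc]
    abel
  have e2 : ∀ Q : Matrix (Fin n) (Fin r) ℝ, (X t * Lam - A * X t)ᵀ * R * Q
      = Lam * ((X t)ᵀ * R * Q) - lam • ((X t)ᵀ * R * Q) + (X t)ᵀ * Q := by
    intro Q
    have : (X t)ᵀ * A * R * Q = (X t)ᵀ * (A * R) * Q := by simp only [Matrix.mul_assoc]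
    rw [hT, Matrix.sub_mul, Matrix.sub_mul, this, hAR]
    simp only [Matrix.mul_sub, Matrix.sub_mul, Matrix.mul_smul, Matrix.smul_mul, Matrix.mul_one,
      Matrix.mul_assoc]
    abel
  have d11 := hasDerivAt_transpose_mul_mul R X P _ _ t (hX t) hP'
  have d12 := hasDerivAt_transpose_mul_mul R X X _ _ t (hX t) (hX t)
  have d21 := hasDerivAt_transpose_mul_mul R P P _ _ t hP' hP'
  have d22 := hasDerivAt_transpose_mul_mul R P X _ _ t hP' (hX t)
  have key : Lstar t * Astar t - Astar t * Lstar t = Matrix.fromBlocks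
      (-((P t)ᵀ * R * P t + (X t)ᵀ * R * (X t * Lam - A * X t)))
      (-((P t)ᵀ * R * X t + (X t)ᵀ * R * P t))
      ((X t * Lam - A * X t)ᵀ * R * P t + (P t)ᵀ * R * (X t * Lam - A * X t))
      ((X t * Lam - A * X t)ᵀ * R * X t + (P t)ᵀ * R * P t) := by
    rw [hL, hAst, ← hLam, Matrix.fromBlocks_multiply, Matrix.fromBlocks_multiply,
      sub_eq_add_neg, Matrix.fromBlocks_neg, Matrix.fromBlocks_add, e1, e1, e2, e2, hc1,
      eq_neg_of_add_eq_zero_left hc2]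
    congr 1 <;>
    simp only [Matrix.mul_sub, Matrix.sub_mul, Matrix.mul_smul, Matrix.smul_mul, Matrix.mul_one,
      Matrix.one_mul, Matrix.mul_zero, Matrix.zero_mul, Matrix.neg_mul, Matrix.mul_neg, smul_neg] <;>
    abel
  rw [key]
  simp only [hL]
  rintro (i | i) (j | j)
  · exact (d11 i j).fun_neg
  · exact (d12 i j).fun_neg
  · exact (d21 i j).const_add ((1 : Matrix (Fin r) (Fin r) ℝ) i j)
  · exact d22 i j
end

section
/- Let X(t), P(t) be differentiable curves of n×r real matrices satisfying for all t the Stiefel constraints XᵀX = I_r, XᵀP + PᵀX = 0 and the Neumann system with the normal metric: Ẋ = P − XPᵀX, Ṗ = −AX + PXᵀP − XPᵀP + XXᵀAX. Then for every real λ such that λI_n − A is invertible, the 2r×2r block matrices L*(λ) = [[−Xᵀ(λI_n−A)⁻¹P, −Xᵀ(λI_n−A)⁻¹X],[I_r + Pᵀ(λI_n−A)⁻¹P, Pᵀ(λI_n−A)⁻¹X]] and A*(λ) = [[XᵀP, I_r],[Λ − λI_r, −PᵀX]] with Λ = XᵀAX − PᵀP satisfy the dual Lax equation d/dt L*(λ)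 = [L*(λ), A*(λ)]. -/
open Matrix

set_option linter.unusedSimpArgs false

/-- Entrywise derivative of a matrix curve. -/
def EDeriv {m k : Type*} (M : ℝ → Matrix m k ℝ) (M' : Matrix m k ℝ) (t : ℝ) : Prop :=
  ∀ i j, HasDerivAt (fun s => M s i j) (M' i j) t

theorem EDeriv.mul {m k l : Type*} [Fintype k] {M : ℝ → Matrix m k ℝ} {M' : Matrix m k ℝ}
    {N : ℝ → Matrix k l ℝ} {N' : Matrix k l ℝ} {t : ℝ}
    (hM : EDeriv M M' t) (hN : EDeriv N N' t) :
    EDeriv (fun s => M s * N s) (M' * N t + M t * N') t := by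
  intro i j
  simp only [Matrix.mul_apply, Matrix.add_apply, ← Finset.sum_add_distrib]
  exact HasDerivAt.fun_sum (fun x _ => (hM i x).mul (hN x j))

theorem EDeriv.sandwich {m k l o : Type*} [Fintype k] [Fintype l]
    {M : ℝ → Matrix k m ℝ} {M' : Matrix k m ℝ} (R : Matrix k l ℝ)
    {N : ℝ → Matrix l o ℝ} {N' : Matrix l o ℝ} {t : ℝ}
    (hM : EDeriv M M' t) (hN : EDeriv N N' t) :
    EDeriv (fun s => (M s)ᵀ * R * N s) (M'ᵀ * R * N t + (M t)ᵀ * R * N') t := by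
  have hR : EDeriv (fun _ => R) 0 t := fun i j => hasDerivAt_const t (R i j)
  have hT : EDeriv (fun s => (M s)ᵀ) M'ᵀ t := fun i j => hM j i
  have h := (hT.mul hR).mul hN
  simpa using h

/-- The Neumann system with the normal metric on the Stiefel variety
implies the dual 2r×2r Lax equation d/dt L*(λ) = [L*(λ), A*(λ)]. -/
theorem neumann_normal_dual_lax {n r : ℕ} (a : Fin n → ℝ)
    (A : Matrix (Fin n) (Fin n) ℝ) (hA : A = Matrix.diagonal a)
    (X P : ℝ → Matrix (Fin n) (Fin r) ℝ)
    (hc1 : ∀ t, (X t)ᵀ * X t = 1)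
    (hc2 : ∀ t, (X t)ᵀ * P t + (P t)ᵀ * X t = 0)
    (hX : ∀ t i j, HasDerivAt (fun s => X s i j)
      ((P t - X t * (P t)ᵀ * X t) i j) t)
    (hP : ∀ t i j, HasDerivAt (fun s => P s i j)
      ((-(A * X t) + P t * (X t)ᵀ * P t - X t * (P t)ᵀ * P t
        + X t * (X t)ᵀ * A * X t) i j) t)
    (lam : ℝ)
    (h1 : IsUnit (lam • (1 : Matrix (Fin n) (Fin n) ℝ) - A))
    (Lstar Astar : ℝ → Matrix (Fin r ⊕ Fin r) (Fin r ⊕ Fin r) ℝ)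
    (hL : ∀ t, Lstar t = Matrix.fromBlocks
      (-((X t)ᵀ * (lam • 1 - A)⁻¹ * P t)) (-((X t)ᵀ * (lam • 1 - A)⁻¹ * X t))
      (1 + (P t)ᵀ * (lam • 1 - A)⁻¹ * P t) ((P t)ᵀ * (lam • 1 - A)⁻¹ * X t))
    (hAst : ∀ t, Astar t = Matrix.fromBlocks
      ((X t)ᵀ * P t) 1
      (((X t)ᵀ * A * X t - (P t)ᵀ * P t) - lam • 1) (-((P t)ᵀ * X t))) :
    ∀ t i j, HasDerivAt (fun s => Lstar s i j)
      ((Lstar t * Astar t - Astar t * Lstar t) i j) t := by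
  intro t
  have hXd : EDeriv X _ t := hX t
  have hPd : EDeriv P _ t := hP t
  have hAT : Aᵀ = A := by rw [hA, Matrix.diagonal_transpose]
  have hdet := (Matrix.isUnit_iff_isUnit_det _).1 h1
  have e1 := Matrix.nonsing_inv_mul _ hdet
  have e2 := Matrix.mul_nonsing_inv _ hdet
  generalize (lam • (1 : Matrix (Fin n) (Fin n) ℝ) - A)⁻¹ = R at *
  have hRA : R * A = lam • R - 1 := by
    rw [← e1, Matrix.mul_sub]; simp
  have hAR : A * R = lam • R - 1 := by
    rw [← e2, Matrix.sub_mul]; simp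
  have hxx := EDeriv.sandwich R hXd hXd
  have hxp := EDeriv.sandwich R hXd hPd
  have hpx := EDeriv.sandwich R hPd hXd
  have hpp := EDeriv.sandwich R hPd hPd
  have c1 := hc1 t
  have c2 : (P t)ᵀ * X t = -((X t)ᵀ * P t) := eq_neg_of_add_eq_zero_right (hc2 t)
  have hfun : Lstar = fun t => Matrix.fromBlocks
      (-((X t)ᵀ * R * P t)) (-((X t)ᵀ * R * X t))
      (1 + (P t)ᵀ * R * P t) ((P t)ᵀ * R * X t) := funext hL
  rw [hfun, hAst t]
  simp only [Matrix.fromBlocks_multiply]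
  generalize X t = x at *
  generalize P t = p at *
  have c1' : ∀ {k : ℕ} (M : Matrix (Fin r) (Fin k) ℝ), xᵀ * (x * M) = M := by
    intro k M; rw [← Matrix.mul_assoc, c1, Matrix.one_mul]
  have c2' : ∀ {k : ℕ} (M : Matrix (Fin r) (Fin k) ℝ), pᵀ * (x * M) = -(xᵀ * (p * M)) := by
    intro k M; rw [← Matrix.mul_assoc, c2, Matrix.neg_mul, Matrix.mul_assoc]
  have hRA' : ∀ {k : ℕ} (M : Matrix (Fin n) (Fin k) ℝ), R * (A * M) = lam • (R * M) - M := by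
    intro k M; rw [← Matrix.mul_assoc, hRA, Matrix.sub_mul, Matrix.one_mul, Matrix.smul_mul]
  have hAR' : ∀ {k : ℕ} (M : Matrix (Fin n) (Fin k) ℝ), A * (R * M) = lam • (R * M) - M := by
    intro k M; rw [← Matrix.mul_assoc, hAR, Matrix.sub_mul, Matrix.one_mul, Matrix.smul_mul]
  rintro (i | i) (j | j)
  · refine ((hxp i j).neg).congr_deriv ?_
    rw [← Matrix.neg_apply]
    simp only [Matrix.sub_apply, Matrix.fromBlocks_apply₁₁]
    rw [← Matrix.sub_apply]
    refine congrFun (congrFun ?_ i) j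
    simp only [Matrix.transpose_add, Matrix.transpose_sub, Matrix.transpose_neg,
      Matrix.transpose_mul, Matrix.transpose_transpose, hAT, Matrix.mul_add, Matrix.add_mul,
      Matrix.mul_sub, Matrix.sub_mul, Matrix.neg_mul, Matrix.mul_neg, Matrix.mul_assoc,
      Matrix.smul_mul, Matrix.mul_smul, Matrix.one_mul, Matrix.mul_one, smul_neg,
      c1, c2, c1', c2', hRA, hAR, hRA', hAR']
    abel
  · refine ((hxx i j).neg).congr_deriv ?_
    rw [← Matrix.neg_apply]
    simp only [Matrix.sub_apply, Matrix.fromBlocks_apply₁₂]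
    rw [← Matrix.sub_apply]
    refine congrFun (congrFun ?_ i) j
    simp only [Matrix.transpose_add, Matrix.transpose_sub, Matrix.transpose_neg,
      Matrix.transpose_mul, Matrix.transpose_transpose, hAT, Matrix.mul_add, Matrix.add_mul,
      Matrix.mul_sub, Matrix.sub_mul, Matrix.neg_mul, Matrix.mul_neg, Matrix.mul_assoc,
      Matrix.smul_mul, Matrix.mul_smul, Matrix.one_mul, Matrix.mul_one, smul_neg,
      c1, c2, c1', c2', hRA, hAR, hRA', hAR']
    abel
  · refine ((hpp i j).const_add ((1 : Matrix (Fin r) (Fin r) ℝ) i j)).congr_deriv ?_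
    simp only [Matrix.sub_apply, Matrix.fromBlocks_apply₂₁]
    rw [← Matrix.sub_apply]
    refine congrFun (congrFun ?_ i) j
    simp only [Matrix.transpose_add, Matrix.transpose_sub, Matrix.transpose_neg,
      Matrix.transpose_mul, Matrix.transpose_transpose, hAT, Matrix.mul_add, Matrix.add_mul,
      Matrix.mul_sub, Matrix.sub_mul, Matrix.neg_mul, Matrix.mul_neg, Matrix.mul_assoc,
      Matrix.smul_mul, Matrix.mul_smul, Matrix.one_mul, Matrix.mul_one, smul_neg,
      c1, c2, c1', c2', hRA, hAR, hRA', hAR']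
    abel
  · refine (hpx i j).congr_deriv ?_
    simp only [Matrix.sub_apply, Matrix.fromBlocks_apply₂₂]
    rw [← Matrix.sub_apply]
    refine congrFun (congrFun ?_ i) j
    simp only [Matrix.transpose_add, Matrix.transpose_sub, Matrix.transpose_neg,
      Matrix.transpose_mul, Matrix.transpose_transpose, hAT, Matrix.mul_add, Matrix.add_mul,
      Matrix.mul_sub, Matrix.sub_mul, Matrix.neg_mul, Matrix.mul_neg, Matrix.mul_assoc,
      Matrix.smul_mul, Matrix.mul_smul, Matrix.one_mul, Matrix.mul_one, smul_neg,
      c1, c2, c1', c2', hRA, hAR, hRA', hAR']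
    abel
end

section
/- Let X(t), P(t) be differentiable curves of n×r real matrices satisfying for all t the Stiefel constraints XᵀX = I_r, XᵀP + PᵀX = 0 and the Neumann equations with parameter κ: Ẋ = P − (1+2κ)XPᵀX, Ṗ = −AX − XPᵀP + (1+2κ)PXᵀP + XXᵀAX. Then the SO(r)-momentum matrix Ψ = XᵀP − PᵀX is a conserved quantity: d/dt (XᵀP − PᵀX) = 0 for all t. -/
open Matrix

/-- Along the Neumann flow with parameter κ on the Stiefel variety, the
SO(r)-momentum Ψ = XᵀP − PᵀX is conserved. -/
theorem neumann_momentum_conserved {n r : ℕ} (a : Fin n → ℝ)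
    (A : Matrix (Fin n) (Fin n) ℝ) (hA : A = Matrix.diagonal a)
    (κ : ℝ) (X P : ℝ → Matrix (Fin n) (Fin r) ℝ)
    (hc1 : ∀ t, (X t)ᵀ * X t = 1)
    (hc2 : ∀ t, (X t)ᵀ * P t + (P t)ᵀ * X t = 0)
    (hX : ∀ t i j, HasDerivAt (fun s => X s i j)
      ((P t - (1 + 2 * κ) • (X t * (P t)ᵀ * X t)) i j) t)
    (hP : ∀ t i j, HasDerivAt (fun s => P s i j)
      ((-(A * X t) - X t * (P t)ᵀ * P t + (1 + 2 * κ) • (P t * (X t)ᵀ * P t)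
        + X t * (X t)ᵀ * A * X t) i j) t) :
    ∀ t i j, HasDerivAt (fun s => ((X s)ᵀ * P s - (P s)ᵀ * X s) i j) 0 t := by
  have key : ∀ t i j, HasDerivAt (fun s => ((X s)ᵀ * P s) i j) 0 t := by
    intro t i j
    have hm : (P t - (1 + 2 * κ) • (X t * (P t)ᵀ * X t))ᵀ * P t
        + (X t)ᵀ * (-(A * X t) - X t * (P t)ᵀ * P t + (1 + 2 * κ) • (P t * (X t)ᵀ * P t)
        + X t * (X t)ᵀ * A * X t) = 0 := by
      have h1 : ∀ M : Matrix (Fin r) (Fin r) ℝ, (X t)ᵀ * (X t * M) = M := by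
        intro M
        rw [← Matrix.mul_assoc, hc1 t, Matrix.one_mul]
      simp only [Matrix.transpose_sub, Matrix.transpose_smul, Matrix.transpose_mul,
        Matrix.transpose_transpose, Matrix.sub_mul, Matrix.mul_add, Matrix.mul_sub,
        Matrix.mul_neg, Matrix.smul_mul, Matrix.mul_smul, Matrix.mul_assoc, h1]
      abel
    have hd : HasDerivAt (fun s => ∑ k, X s k i * P s k j) _ t :=
      HasDerivAt.fun_sum (fun k _ => (hX t k i).mul (hP t k j))
    have he := congrFun (congrFun hm i) j
    rw [Matrix.add_apply, Matrix.mul_apply, Matrix.mul_apply, ← Finset.sum_add_distrib] at he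
    have hd2 := hd.congr_deriv he
    simpa only [Matrix.mul_apply, Matrix.transpose_apply, Matrix.zero_apply] using hd2
  intro t i j
  have h := (key t i j).sub (key t j i)
  rw [sub_zero] at h
  refine h.congr_of_eventuallyEq (Filter.Eventually.of_forall fun s => ?_)
  simp [Matrix.sub_apply, Matrix.mul_apply, mul_comm]
end

section
/- Let X, P be n×r real matrices satisfying the Stiefel constraints XᵀX = I_r and XᵀP + PᵀX = 0, and set V = P − XPᵀX. Then P = V − (1/2)·XXᵀV. (Thus the relation Ẋ = Φ·X = P − XPᵀX between velocities and momenta for the normal metric can be uniquely inverted as P = Ẋ − (1/2)XXᵀẊ.) -/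
open Matrix

/-- On the cotangent bundle of the Stiefel variety, the relation
V = P − XPᵀX is inverted by P = V − (1/2)XXᵀV. -/
theorem stiefel_normal_metric_legendre_inverse {n r : ℕ}
    (X P V : Matrix (Fin n) (Fin r) ℝ)
    (hc1 : Xᵀ * X = 1) (hc2 : Xᵀ * P + Pᵀ * X = 0)
    (hV : V = P - X * Pᵀ * X) :
    P = V - (1 / 2 : ℝ) • (X * Xᵀ * V) := by
  have h1 : Xᵀ * P = -(Pᵀ * X) := eq_neg_of_add_eq_zero_left hc2
  have h2 : Xᵀ * V = (-2 : ℝ) • (Pᵀ * X) := by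
    rw [hV, Matrix.mul_sub, Matrix.mul_assoc X, ← Matrix.mul_assoc Xᵀ X, hc1, Matrix.one_mul, h1]
    module
  rw [Matrix.mul_assoc X, h2, Matrix.mul_smul, hV, Matrix.mul_assoc X]
  module
end

section
/- Let A be a symmetric n×n real matrix, let e(t) ∈ ℝⁿ and Ω(t) ∈ M_n(ℝ) be differentiable curves with Ω(t) skew-symmetric and (e(t), e(t)) = 1 for all t, satisfying the reduced Neumann equations ė = Ωe and Ω̇ = [A, e⊗e] (i.e. Ω̇ = A(e eᵀ) − (e eᵀ)A). Then the second derivative of e satisfies ë = Ae − ((e, Ae) + (ė, ė))·e + F_Ω·ė, where F_Ω = Ω − (ė eᵀ − e ėᵀ); i.e. the reduced system is the Neumann system on the sphere S^{n−1} perturbed by the Yang–Mills force F_Ω ė. -/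
open Matrix

/-- The reduced Neumann system ė = Ωe, Ω̇ = [A, e⊗e] on so(n) × S^{n−1}
yields ë = Ae − ((e,Ae) + (ė,ė))e + F_Ω ė, where F_Ω = Ω − (ė∧e) = Ω − (ėeᵀ − eėᵀ). -/
theorem reduced_neumann_yang_mills {n : ℕ}
    (A : Matrix (Fin n) (Fin n) ℝ) (hAsym : Aᵀ = A)
    (e : ℝ → Fin n → ℝ) (Ω : ℝ → Matrix (Fin n) (Fin n) ℝ)
    (hskew : ∀ t, (Ω t)ᵀ = -Ω t)
    (hsphere : ∀ t, e t ⬝ᵥ e t = 1)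
    (he : ∀ t i, HasDerivAt (fun s => e s i) ((Ω t *ᵥ e t) i) t)
    (hΩ : ∀ t i j, HasDerivAt (fun s => Ω s i j)
      ((A * Matrix.vecMulVec (e t) (e t) - Matrix.vecMulVec (e t) (e t) * A) i j) t) :
    ∀ t i, HasDerivAt (fun s => (Ω s *ᵥ e s) i)
      ((A *ᵥ e t
        - ((e t ⬝ᵥ (A *ᵥ e t)) + ((Ω t *ᵥ e t) ⬝ᵥ (Ω t *ᵥ e t))) • e t
        + (Ω t - (Matrix.vecMulVec (Ω t *ᵥ e t) (e t)
            - Matrix.vecMulVec (e t) (Ω t *ᵥ e t))) *ᵥ (Ω t *ᵥ e t)) i) t := by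
  intro t i
  have horth : e t ⬝ᵥ (Ω t *ᵥ e t) = 0 := by
    have h : e t ⬝ᵥ (Ω t *ᵥ e t) = -(e t ⬝ᵥ (Ω t *ᵥ e t)) := by
      conv_lhs => rw [Matrix.dotProduct_mulVec, ← Matrix.mulVec_transpose, hskew t,
        Matrix.neg_mulVec, neg_dotProduct, dotProduct_comm]
    linarith
  have hd : HasDerivAt (fun s => ∑ j, Ω s i j * e s j)
      (∑ j, ((A * Matrix.vecMulVec (e t) (e t) - Matrix.vecMulVec (e t) (e t) * A) i j * e t j
        + Ω t i j * (Ω t *ᵥ e t) j)) t :=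
    HasDerivAt.fun_sum fun j _ => (hΩ t i j).mul (he t j)
  have hval : (∑ j, ((A * Matrix.vecMulVec (e t) (e t)
        - Matrix.vecMulVec (e t) (e t) * A) i j * e t j + Ω t i j * (Ω t *ᵥ e t) j))
      = ((A * Matrix.vecMulVec (e t) (e t) - Matrix.vecMulVec (e t) (e t) * A) *ᵥ e t
        + Ω t *ᵥ (Ω t *ᵥ e t)) i := by
    rw [Finset.sum_add_distrib]
    rfl
  rw [hval] at hd
  refine hd.congr_deriv ?_
  simp only [Matrix.sub_mulVec, ← Matrix.mulVec_mulVec, Matrix.vecMulVec_mulVec, hsphere, horth]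
  simp [Matrix.mulVec_smul, Matrix.mulVec_mulVec]
  ring
end

section
/- Let A = diag(a₁,…,aₙ) be a real diagonal n×n matrix and let X(t), Y(t) be twice differentiable curves of n×r real matrices satisfying the constraint XᵀY = I_r for all t and the rank r double Neumann equations Ẍ = −AX + XΛᵀ, Ÿ = −AY + YΛ, where Λ = XᵀAY − ẊᵀẎ. Then the r×r matrix XᵀẎ − YᵀẊ is a first integral: d/dt (XᵀẎ − YᵀẊ) = 0 for all t. -/
open Matrix

/-- For the rank r double Neumann system the matrix XᵀẎ − YᵀẊ is a
first integral. -/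
theorem double_neumann_matrix_integral {n r : ℕ} (a : Fin n → ℝ)
    (A : Matrix (Fin n) (Fin n) ℝ) (hA : A = Matrix.diagonal a)
    (X Y X' Y' : ℝ → Matrix (Fin n) (Fin r) ℝ)
    (hconstr : ∀ t, (X t)ᵀ * Y t = 1)
    (hX' : ∀ t i j, HasDerivAt (fun s => X s i j) (X' t i j) t)
    (hY' : ∀ t i j, HasDerivAt (fun s => Y s i j) (Y' t i j) t)
    (Lam : ℝ → Matrix (Fin r) (Fin r) ℝ)
    (hLam : ∀ t, Lam t = (X t)ᵀ * A * Y t - (X' t)ᵀ * Y' t)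
    (hX'' : ∀ t i j, HasDerivAt (fun s => X' s i j)
      ((-(A * X t) + X t * (Lam t)ᵀ) i j) t)
    (hY'' : ∀ t i j, HasDerivAt (fun s => Y' s i j)
      ((-(A * Y t) + Y t * Lam t) i j) t) :
    ∀ t i j, HasDerivAt (fun s => ((X s)ᵀ * Y' s - (Y s)ᵀ * X' s) i j) 0 t := by
  intro t i j
  have hprod : ∀ (P Q P' Q' : ℝ → Matrix (Fin n) (Fin r) ℝ),
      (∀ i j, HasDerivAt (fun s => P s i j) (P' t i j) t) →
      (∀ i j, HasDerivAt (fun s => Q s i j) (Q' t i j) t) →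
      HasDerivAt (fun s => ((P s)ᵀ * Q s) i j)
        (((P' t)ᵀ * Q t + (P t)ᵀ * Q' t) i j) t := by
    intro P Q P' Q' hP hQ
    simp only [Matrix.mul_apply, Matrix.add_apply, Matrix.transpose_apply,
      ← Finset.sum_add_distrib]
    exact HasDerivAt.fun_sum fun k _ => (hP k i).mul (hQ k j)
  have h1 := hprod X Y' X' (fun t => -(A * Y t) + Y t * Lam t) (hX' t) (hY'' t)
  have h2 := hprod Y X' Y' (fun t => -(A * X t) + X t * (Lam t)ᵀ) (hY' t) (hX'' t)
  have h := h1.sub h2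
  have hAt : Aᵀ = A := by rw [hA, Matrix.diagonal_transpose]
  have hc' : (Y t)ᵀ * X t = 1 := by
    have := congrArg Matrix.transpose (hconstr t)
    simpa using this
  have key : ((X' t)ᵀ * Y' t + (X t)ᵀ * (-(A * Y t) + Y t * Lam t))
      - ((Y' t)ᵀ * X' t + (Y t)ᵀ * (-(A * X t) + X t * (Lam t)ᵀ)) = 0 := by
    rw [Matrix.mul_add, Matrix.mul_add, ← Matrix.mul_assoc _ (Y t), hconstr,
      ← Matrix.mul_assoc _ (X t), hc', hLam]
    simp only [Matrix.transpose_sub, Matrix.transpose_mul, Matrix.transpose_transpose, hAt,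
      Matrix.mul_neg, Matrix.one_mul, Matrix.mul_assoc]
    abel
  have k2 := congrFun (congrFun key i) j
  rw [Matrix.sub_apply, Matrix.zero_apply] at k2
  rw [k2] at h
  exact h
end

section
/- Let A = diag(a₁,…,aₙ) be a real diagonal n×n matrix and let Z(t) be a twice differentiable curve of n×r complex matrices satisfying the constraint Z̄ᵀZ = I_r for all t and the Neumann equation on the complex Stiefel variety: Z̈ = −AZ + ZΛ, where Λ = Z̄ᵀAZ − Ż̄ᵀŻ (bar denotes entrywise complex conjugation). Then the r×r complex matrix ψ₀ = ZᵀŻ̄ − ŻᵀZ̄ is conserved: d/dt (ZᵀŻ̄ − ŻᵀZ̄) = 0 for all t. -/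
open Matrix

/-- For the Neumann system on the complex Stiefel variety, the U(r)-momentum
ψ₀ = ZᵀŻ̄ − ŻᵀZ̄ is conserved. -/
theorem complex_neumann_momentum_conserved {n r : ℕ} (a : Fin n → ℝ)
    (A : Matrix (Fin n) (Fin n) ℂ) (hA : A = Matrix.diagonal (fun i => (a i : ℂ)))
    (Z Z' : ℝ → Matrix (Fin n) (Fin r) ℂ)
    (hconstr : ∀ t, (Z t)ᴴ * Z t = 1)
    (hZ' : ∀ t i j, HasDerivAt (fun s => Z s i j) (Z' t i j) t)
    (Lam : ℝ → Matrix (Fin r) (Fin r) ℂ)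
    (hLam : ∀ t, Lam t = (Z t)ᴴ * A * Z t - (Z' t)ᴴ * Z' t)
    (hZ'' : ∀ t i j, HasDerivAt (fun s => Z' s i j)
      ((-(A * Z t) + Z t * Lam t) i j) t) :
    ∀ t i j, HasDerivAt
      (fun s => ((Z s)ᵀ * (Z' s).map (starRingEnd ℂ)
        - (Z' s)ᵀ * (Z s).map (starRingEnd ℂ)) i j) 0 t := by
  intro t i j
  have hAH : Aᴴ = A := by
    subst hA
    rw [Matrix.diagonal_conjTranspose]
    congr 1
    funext k
    simp
  have hLH : (Lam t)ᴴ = Lam t := by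
    rw [hLam]
    simp [Matrix.conjTranspose_mul, hAH, Matrix.mul_assoc]
  set W : Matrix (Fin n) (Fin r) ℂ := -(A * Z t) + Z t * Lam t with hW
  have h1 : (Z t)ᴴ * W = -((Z t)ᴴ * A * Z t) + Lam t := by
    rw [hW, Matrix.mul_add, Matrix.mul_neg, ← Matrix.mul_assoc, ← Matrix.mul_assoc, hconstr,
      Matrix.one_mul]
  have h2 : Wᴴ * Z t = (Z t)ᴴ * W := by
    have h3 : ((Z t)ᴴ * W)ᴴ = (Z t)ᴴ * W := by
      rw [h1]
      simp [Matrix.conjTranspose_mul, hAH, hLH, Matrix.mul_assoc]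
    rw [← h3]
    simp [Matrix.conjTranspose_mul]
  have h4 := congrFun (congrFun h2 j) i
  simp only [Matrix.mul_apply, Matrix.conjTranspose_apply] at h4
  simp only [Matrix.sub_apply, Matrix.mul_apply, Matrix.transpose_apply, Matrix.map_apply]
  have hd : HasDerivAt (fun s => ∑ k, Z s k i * (starRingEnd ℂ) (Z' s k j)
      - ∑ k, Z' s k i * (starRingEnd ℂ) (Z s k j))
      (∑ k, (Z' t k i * (starRingEnd ℂ) (Z' t k j) + Z t k i * (starRingEnd ℂ) (W k j))
      - ∑ k, (W k i * (starRingEnd ℂ) (Z t k j) + Z' t k i * (starRingEnd ℂ) (Z' t k j))) t := by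
    refine HasDerivAt.sub (HasDerivAt.fun_sum fun k _ => ?_) (HasDerivAt.fun_sum fun k _ => ?_)
    · exact (hZ' t k i).mul (hZ'' t k j).star
    · exact (hZ'' t k i).mul (hZ' t k j).star
  convert hd using 1
  have e1 : ∑ k, Z t k i * (starRingEnd ℂ) (W k j) = ∑ k, W k i * (starRingEnd ℂ) (Z t k j) := by
    simpa [mul_comm] using h4
  rw [Finset.sum_add_distrib, Finset.sum_add_distrib, e1]
  ring
end

section
/- Let B = diag(b₁,…,b_m) be a real diagonal m×m matrix with all b_i ≠ 0, and let V be an m×k real matrix of rank k (so its columns span a k-dimensional plane π through the origin of ℝᵐ). Then π is tangent to the nondegenerate cone {x ∈ ℝᵐ : xᵀBx = 0} — i.e. there exists a nonzero vector v in the column space of V with vᵀBw = 0 for every w in the column space of V — if and only if the Plücker coordinates G_I of π (the k×k minors of V indexed by k-element subsets I ⊆ {1,…,m} of rows) satisfy Σ_I (∏_{i∈I} b_i)·G_I² = 0. -/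
open Matrix

theorem det_mul_expand {m k : ℕ} (V W : Matrix (Fin m) (Fin k) ℝ) :
    (Vᵀ * W).det = ∑ p : Fin k → Fin m, (∏ i, V (p i) i) * (W.submatrix p id).det := by
  have h : (Vᵀ * W) = fun i => ∑ l, V l i • W l := by
    ext i j
    simp [Matrix.mul_apply, Finset.sum_apply]
  rw [h]
  change Matrix.detRowAlternating.toMultilinearMap (fun i => ∑ l, V l i • W l) = _
  rw [MultilinearMap.map_sum]
  refine Finset.sum_congr rfl fun p _ => ?_
  rw [MultilinearMap.map_smul_univ]
  rfl

theorem cauchy_binet_aux {m k : ℕ} (V W : Matrix (Fin m) (Fin k) ℝ) :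
    (Vᵀ * W).det = ∑ s ∈ (Finset.powersetCard k (Finset.univ : Finset (Fin m))).attach,
      (V.submatrix (s.1.orderEmbOfFin (Finset.mem_powersetCard.mp s.2).2) id).det *
      (W.submatrix (s.1.orderEmbOfFin (Finset.mem_powersetCard.mp s.2).2) id).det := by
  rw [det_mul_expand]
  have h1 : ∀ s ∈ (Finset.powersetCard k (Finset.univ : Finset (Fin m))).attach,
      (V.submatrix (s.1.orderEmbOfFin (Finset.mem_powersetCard.mp s.2).2) id).det *
      (W.submatrix (s.1.orderEmbOfFin (Finset.mem_powersetCard.mp s.2).2) id).det =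
      ∑ σ : Equiv.Perm (Fin k),
        (∏ i, V (s.1.orderEmbOfFin (Finset.mem_powersetCard.mp s.2).2 (σ i)) i) *
        (W.submatrix (fun i => s.1.orderEmbOfFin (Finset.mem_powersetCard.mp s.2).2 (σ i))
          id).det := by
    intro s _
    rw [Matrix.det_apply' (V.submatrix _ _), Finset.sum_mul]
    refine Finset.sum_congr rfl fun σ _ => ?_
    have := Matrix.det_permute σ
      (W.submatrix (s.1.orderEmbOfFin (Finset.mem_powersetCard.mp s.2).2) id)
    rw [Matrix.submatrix_submatrix] at this
    change (W.submatrix (fun i => s.1.orderEmbOfFin (Finset.mem_powersetCard.mp s.2).2 (σ i))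
          id).det = _ at this
    rw [this]
    simp only [Matrix.submatrix_apply, id]
    ring
  rw [Finset.sum_congr rfl h1, ← Finset.sum_product']
  symm
  refine Finset.sum_of_injOn
    (fun x i => x.1.1.orderEmbOfFin (Finset.mem_powersetCard.mp x.1.2).2 (x.2 i)) ?_ ?_ ?_ ?_
  · rintro ⟨⟨s, hs⟩, σ⟩ _ ⟨⟨t, ht⟩, τ⟩ _ h
    have hst : s = t := by
      have := congrArg Set.range h
      change Set.range ((s.orderEmbOfFin (Finset.mem_powersetCard.mp hs).2) ∘ σ) =
        Set.range ((t.orderEmbOfFin (Finset.mem_powersetCard.mp ht).2) ∘ τ) at this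
      rw [σ.surjective.range_comp, τ.surjective.range_comp, Finset.range_orderEmbOfFin,
        Finset.range_orderEmbOfFin] at this
      exact_mod_cast this
    subst hst
    have : σ = τ := by
      ext i
      have := congrFun h i
      simp only [EmbeddingLike.apply_eq_iff_eq] at this
      rw [this]
    rw [this]
  · intro x _
    simp
  · intro p _ hp
    by_cases hinj : Function.Injective p
    · exfalso
      apply hp
      have hc : (Finset.univ.image p).card = k := by
        rw [Finset.card_image_of_injective _ hinj]; simp
      have hs : Finset.univ.image p ∈ Finset.powersetCard k (Finset.univ : Finset (Fin m)) :=
        Finset.mem_powersetCard.mpr ⟨Finset.subset_univ _, hc⟩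
      let e := (Finset.univ.image p).orderIsoOfFin hc
      have hmem : ∀ i, p i ∈ Finset.univ.image p := fun i =>
        Finset.mem_image_of_mem _ (Finset.mem_univ _)
      have hi : Function.Injective (fun i => e.symm ⟨p i, hmem i⟩) := by
        intro i j hij
        have := e.symm.injective hij
        exact hinj (congrArg Subtype.val this)
      refine ⟨(⟨_, hs⟩, Equiv.ofBijective _ (Finite.injective_iff_bijective.mp hi)), by simp, ?_⟩
      funext i
      simp only [Equiv.ofBijective_apply]
      rw [← Finset.coe_orderIsoOfFin_apply]
      change (e (e.symm ⟨p i, hmem i⟩)).1 = p i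
      rw [e.apply_symm_apply]
    · simp only [Function.Injective, not_forall] at hinj
      obtain ⟨i, j, hij, hne⟩ := hinj
      rw [Matrix.det_zero_of_row_eq hne, mul_zero]
      funext l
      simp [hij]
  · intro x _
    rfl


/-- A k-plane through the origin in ℝᵐ, spanned by the columns of a rank-k
matrix V, is tangent to the nondegenerate cone {xᵀBx = 0} (B = diag(b), all bᵢ ≠ 0) iff
its Plücker coordinates G_I (the k×k row minors of V) satisfy Σ_I (∏_{i∈I} bᵢ)·G_I² = 0. -/
theorem plucker_tangency_criterion {m k : ℕ} (b : Fin m → ℝ) (hb : ∀ i, b i ≠ 0)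
    (B : Matrix (Fin m) (Fin m) ℝ) (hB : B = Matrix.diagonal b)
    (V : Matrix (Fin m) (Fin k) ℝ) (hV : V.rank = k) :
    (∃ v : Fin m → ℝ, v ≠ 0 ∧ (∃ c : Fin k → ℝ, v = V *ᵥ c) ∧
      ∀ w : Fin m → ℝ, (∃ d : Fin k → ℝ, w = V *ᵥ d) → v ⬝ᵥ (B *ᵥ w) = 0)
    ↔ ∑ s ∈ (Finset.powersetCard k (Finset.univ : Finset (Fin m))).attach,
        (∏ i ∈ s.1, b i) *
          (Matrix.det (V.submatrix
            (fun j => (s.1.orderIsoOfFin ((Finset.mem_powersetCard.mp s.2).2) j).1)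
            id)) ^ 2 = 0 := by
  subst hB
  have hsum : ∑ s ∈ (Finset.powersetCard k (Finset.univ : Finset (Fin m))).attach,
        (∏ i ∈ s.1, b i) *
          (Matrix.det (V.submatrix
            (fun j => (s.1.orderIsoOfFin ((Finset.mem_powersetCard.mp s.2).2) j).1)
            id)) ^ 2 = (Vᵀ * (Matrix.diagonal b * V)).det := by
    rw [cauchy_binet_aux]
    refine Finset.sum_congr rfl fun s _ => ?_
    have hc := (Finset.mem_powersetCard.mp s.2).2
    have h1 : (Matrix.diagonal b * V).submatrix (s.1.orderEmbOfFin hc) id =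
        Matrix.diagonal (fun i => b (s.1.orderEmbOfFin hc i)) *
          V.submatrix (s.1.orderEmbOfFin hc) id := by
      ext i j
      simp [Matrix.diagonal_mul]
    have h2 : ∏ i ∈ s.1, b i = ∏ i, b (s.1.orderEmbOfFin hc i) := by
      rw [← Finset.prod_coe_sort, ← (s.1.orderIsoOfFin hc).toEquiv.prod_comp]
      rfl
    rw [h1, Matrix.det_mul, Matrix.det_diagonal, h2]
    simp only [Finset.coe_orderIsoOfFin_apply]
    ring
  rw [hsum, ← Matrix.exists_vecMul_eq_zero_iff]
  have hinj : ∀ c, V *ᵥ c = 0 → c = 0 := by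
    have hli : LinearIndependent ℝ V.col := by
      rw [linearIndependent_iff_card_eq_finrank_span, Set.finrank, ← Matrix.rank_eq_finrank_span_cols, hV]
      simp
    have := Matrix.mulVec_injective_iff.mpr hli
    intro c hc
    exact this (by simpa using hc)
  have key : ∀ c d : Fin k → ℝ, (V *ᵥ c) ⬝ᵥ (Matrix.diagonal b *ᵥ (V *ᵥ d)) =
      (c ᵥ* (Vᵀ * (Matrix.diagonal b * V))) ⬝ᵥ d := by
    intro c d
    rw [Matrix.mulVec_mulVec, Matrix.dotProduct_mulVec, ← Matrix.vecMul_vecMul c,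
      Matrix.vecMul_transpose]
  constructor
  · rintro ⟨v, hv, ⟨c, rfl⟩, h⟩
    refine ⟨c, fun hc => hv (by simp [hc]), ?_⟩
    apply dotProduct_eq_zero
    intro d
    rw [← key]
    exact h _ ⟨d, rfl⟩
  · rintro ⟨c, hc, h⟩
    refine ⟨V *ᵥ c, fun h0 => hc (hinj c h0), ⟨c, rfl⟩, ?_⟩
    rintro _ ⟨d, rfl⟩
    rw [key, h, zero_dotProduct]
end

section
/- (Generalized Chasles theorem.) Let A = diag(a₁,…,aₙ) and let X(t), P(t) be differentiable curves of n×r real matrices satisfying for all t the Stiefel constraints XᵀX = I_r, XᵀP + PᵀX = 0, and the Neumann system with the Euclidean metric: Ẋ = P, Ṗ = −AX − XPᵀP + XXᵀAX. Fix c ∈ ℝ with cI_n − A invertible, and let 𝒱(t) be the (n+r)×2r matrix whose block form is [[X(t), P(t)],[0, I_r]], and B(c) the (n+r)×(n+r) diagonal matrix diag(1/(c−a₁),…,1/(c−aₙ),1,…,1). If at some time t₀ the 2r-plane spanned by the columns of 𝒱(t₀) is tangent to the cone {w ∈ ℝ^{n+r} : wᵀB(c)w = 0} — i.e. there exists a nonzero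 vector v in the column space of 𝒱(t₀) with vᵀB(c)w = 0 for all w in the column space of 𝒱(t₀) — then the same tangency holds at every time t. -/
open Matrix

/-- Entrywise derivative of a matrix valued curve. -/
def EntryDeriv {m k : Type*} (F : ℝ → Matrix m k ℝ) (D : Matrix m k ℝ) (t : ℝ) : Prop :=
  ∀ i j, HasDerivAt (fun s => F s i j) (D i j) t

lemma EntryDeriv.mul {m k l : Type*} [Fintype k] {F : ℝ → Matrix m k ℝ} {G : ℝ → Matrix k l ℝ}
    {F' : Matrix m k ℝ} {G' : Matrix k l ℝ} {t : ℝ}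
    (hF : EntryDeriv F F' t) (hG : EntryDeriv G G' t) :
    EntryDeriv (fun s => F s * G s) (F' * G t + F t * G') t := by
  intro i j
  simp only [Matrix.mul_apply, Matrix.add_apply, ← Finset.sum_add_distrib]
  exact HasDerivAt.fun_sum fun k _ => (hF i k).mul (hG k j)

lemma EntryDeriv.transpose {m k : Type*} {F : ℝ → Matrix m k ℝ}
    {F' : Matrix m k ℝ} {t : ℝ} (hF : EntryDeriv F F' t) :
    EntryDeriv (fun s => (F s)ᵀ) F'ᵀ t := fun i j => hF j i

lemma EntryDeriv.const {m k : Type*} (F : Matrix m k ℝ) (t : ℝ) :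
    EntryDeriv (fun _ => F) 0 t := fun i j => hasDerivAt_const t (F i j)

/-- The Jacobi formula. -/
lemma EntryDeriv.det {m : Type*} [Fintype m] [DecidableEq m] {G : ℝ → Matrix m m ℝ}
    {D : Matrix m m ℝ} {t : ℝ} (h : EntryDeriv G D t) :
    HasDerivAt (fun s => (G s).det) ((G t).adjugate * D).trace t := by
  have h1 : HasDerivAt (fun s => (G s).det)
      (∑ σ : Equiv.Perm m, ((Equiv.Perm.sign σ : ℤ) : ℝ) *
        ∑ i, (∏ j ∈ Finset.univ.erase i, G t (σ j) j) • D (σ i) i) t := by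
    simp only [Matrix.det_apply']
    refine HasDerivAt.fun_sum fun σ _ => HasDerivAt.const_mul _ ?_
    exact HasDerivAt.fun_finsetProd fun i _ => h (σ i) i
  convert h1 using 1
  have h2 : ∀ i, ((G t).adjugate * D) i i = ((G t).updateCol i (fun k => D k i)).det := by
    intro i
    rw [← Matrix.cramer_apply, Matrix.cramer_eq_adjugate_mulVec]
    rfl
  simp only [Matrix.trace, Matrix.diag, h2, Matrix.det_apply', Finset.mul_sum]
  rw [Finset.sum_comm]
  refine Finset.sum_congr rfl fun σ _ => Finset.sum_congr rfl fun i _ => ?_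
  rw [← Finset.mul_prod_erase _ _ (Finset.mem_univ i)]
  have h3 : ∏ j ∈ Finset.univ.erase i, (G t).updateCol i (fun k => D k i) (σ j) j
      = ∏ j ∈ Finset.univ.erase i, G t (σ j) j :=
    Finset.prod_congr rfl fun j hj => by
      rw [Matrix.updateCol_ne (Finset.ne_of_mem_erase hj)]
  rw [h3, Matrix.updateCol_self, smul_eq_mul, mul_comm (D _ _)]

/-- Tangency is the vanishing of the Gram determinant. -/
lemma tangent_iff_det {N K : Type*} [Fintype N] [Fintype K] [DecidableEq K]
    (V : Matrix N K ℝ) (B : Matrix N N ℝ) (hB : Bᵀ = B)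
    (hV : ∀ u, V *ᵥ u = 0 → u = 0) :
    (∃ v : N → ℝ, v ≠ 0 ∧ (∃ cv : K → ℝ, v = V *ᵥ cv) ∧
      ∀ w : N → ℝ, (∃ d : K → ℝ, w = V *ᵥ d) → v ⬝ᵥ (B *ᵥ w) = 0) ↔
    (Vᵀ * B * V).det = 0 := by
  have key : ∀ u d, (V *ᵥ u) ⬝ᵥ (B *ᵥ (V *ᵥ d)) = ((Vᵀ * B * V) *ᵥ u) ⬝ᵥ d := by
    intro u d
    rw [← Matrix.mulVec_mulVec, ← Matrix.mulVec_mulVec, Matrix.mulVec_transpose,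
      ← Matrix.dotProduct_mulVec, Matrix.dotProduct_mulVec, ← Matrix.mulVec_transpose, hB]
  rw [← Matrix.exists_mulVec_eq_zero_iff]
  constructor
  · rintro ⟨v, hv, ⟨u, rfl⟩, hw⟩
    refine ⟨u, fun h => hv (by rw [h, Matrix.mulVec_zero]), ?_⟩
    apply dotProduct_self_eq_zero.mp
    rw [← key]
    exact hw _ ⟨_, rfl⟩
  · rintro ⟨u, hu, h⟩
    refine ⟨V *ᵥ u, fun h0 => hu (hV u h0), ⟨u, rfl⟩, ?_⟩
    rintro w ⟨d, rfl⟩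
    rw [key, h, zero_dotProduct]

/-- Generalized Chasles theorem: Along the Neumann flow with the Euclidean
metric on the Stiefel variety, if the 2r-plane in ℝ^{n+r} spanned by the columns of
𝒱(t) = [[X, P],[0, I_r]] is tangent to the confocal cone {wᵀB(c)w = 0},
B(c) = diag(1/(c−a₁),…,1/(c−aₙ),1,…,1), at one time t₀, then it is tangent at all times. -/
theorem generalized_chasles {n r : ℕ} (a : Fin n → ℝ)
    (A : Matrix (Fin n) (Fin n) ℝ) (hA : A = Matrix.diagonal a)
    (X P : ℝ → Matrix (Fin n) (Fin r) ℝ)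
    (hc1 : ∀ t, (X t)ᵀ * X t = 1)
    (hc2 : ∀ t, (X t)ᵀ * P t + (P t)ᵀ * X t = 0)
    (hX : ∀ t i j, HasDerivAt (fun s => X s i j) (P t i j) t)
    (hP : ∀ t i j, HasDerivAt (fun s => P s i j)
      ((-(A * X t) - X t * (P t)ᵀ * P t + X t * (X t)ᵀ * A * X t) i j) t)
    (c : ℝ) (hc : IsUnit (c • (1 : Matrix (Fin n) (Fin n) ℝ) - A))
    (𝒱 : ℝ → Matrix (Fin n ⊕ Fin r) (Fin r ⊕ Fin r) ℝ)
    (h𝒱 : ∀ t, 𝒱 t = Matrix.fromBlocks (X t) (P t) 0 1)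
    (Bc : Matrix (Fin n ⊕ Fin r) (Fin n ⊕ Fin r) ℝ)
    (hBc : Bc = Matrix.diagonal (Sum.elim (fun i => 1 / (c - a i)) (fun _ => 1)))
    (t₀ : ℝ)
    (htan : ∃ v : Fin n ⊕ Fin r → ℝ, v ≠ 0 ∧ (∃ cv : Fin r ⊕ Fin r → ℝ, v = 𝒱 t₀ *ᵥ cv) ∧
      ∀ w : Fin n ⊕ Fin r → ℝ, (∃ d : Fin r ⊕ Fin r → ℝ, w = 𝒱 t₀ *ᵥ d) →
        v ⬝ᵥ (Bc *ᵥ w) = 0) :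
    ∀ t : ℝ, ∃ v : Fin n ⊕ Fin r → ℝ, v ≠ 0 ∧ (∃ cv : Fin r ⊕ Fin r → ℝ, v = 𝒱 t *ᵥ cv) ∧
      ∀ w : Fin n ⊕ Fin r → ℝ, (∃ d : Fin r ⊕ Fin r → ℝ, w = 𝒱 t *ᵥ d) →
        v ⬝ᵥ (Bc *ᵥ w) = 0 := by
  have hca : ∀ i, c - a i ≠ 0 := by
    have h1 : c • (1 : Matrix (Fin n) (Fin n) ℝ) - A = Matrix.diagonal (fun i => c - a i) := by
      rw [hA, Matrix.smul_one_eq_diagonal, Matrix.diagonal_sub]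
    rw [h1, Matrix.isUnit_diagonal, Pi.isUnit_iff] at hc
    exact fun i => (hc i).ne_zero
  have hBs : Bcᵀ = Bc := by rw [hBc, Matrix.diagonal_transpose]
  have hinj : ∀ t u, 𝒱 t *ᵥ u = 0 → u = 0 := by
    intro t u hu
    rw [h𝒱, Matrix.fromBlocks_mulVec] at hu
    have h2 : u ∘ Sum.inr = 0 := by
      funext j
      simpa using congrFun hu (Sum.inr j)
    have h1 : X t *ᵥ (u ∘ Sum.inl) = 0 := by
      funext j
      have := congrFun hu (Sum.inl j)
      simpa [h2] using this
    have h3 : u ∘ Sum.inl = 0 := by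
      have := congrArg (fun z => (X t)ᵀ *ᵥ z) h1
      simpa [Matrix.mulVec_mulVec, hc1] using this
    funext j
    rcases j with j | j
    · exact congrFun h3 j
    · exact congrFun h2 j
  have htr : ∀ t, HasDerivAt (fun s => ((𝒱 s)ᵀ * Bc * 𝒱 s).det) 0 t := by
    intro t
    set R : Matrix (Fin n) (Fin n) ℝ := Matrix.diagonal (fun i => 1 / (c - a i)) with hR
    have hRt : Rᵀ = R := by rw [hR, Matrix.diagonal_transpose]
    have hRA : R * A = c • R - 1 := by
      rw [hR, hA, Matrix.diagonal_mul_diagonal]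
      ext i j
      by_cases hij : i = j
      · subst hij
        have := hca i
        simp
        field_simp
        ring
      · simp [hij]
    have hB' : Bc = Matrix.fromBlocks R 0 0 1 := by
      rw [hBc, hR, ← Matrix.diagonal_one, Matrix.fromBlocks_diagonal]
    set S : Matrix (Fin r) (Fin r) ℝ := -(c • 1) - (P t)ᵀ * P t + (X t)ᵀ * A * X t with hS
    set Q : Matrix (Fin n) (Fin r) ℝ :=
      -(A * X t) - X t * (P t)ᵀ * P t + X t * (X t)ᵀ * A * X t with hQ
    have hAt : Aᵀ = A := by rw [hA, Matrix.diagonal_transpose]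
    have hSt : Sᵀ = S := by
      simp [hS, Matrix.transpose_mul, hAt, Matrix.mul_assoc]
    have hRQ : R * Q = X t + R * X t * S := by
      have : R * Q = -((R * A) * X t) + R * X t * (- (P t)ᵀ * P t + (X t)ᵀ * A * X t) := by
        rw [hQ]
        simp only [Matrix.mul_add, Matrix.mul_sub, Matrix.mul_neg, Matrix.neg_mul,
          Matrix.mul_assoc]
        abel
      rw [this, hRA, hS]
      simp only [Matrix.mul_add, Matrix.mul_sub, Matrix.mul_neg, Matrix.neg_mul, Matrix.sub_mul,
        Matrix.mul_assoc, Matrix.smul_mul, Matrix.mul_smul, Matrix.mul_one, Matrix.one_mul]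
      abel
    have hQR : Qᵀ * R = (X t)ᵀ + S * (X t)ᵀ * R := by
      have := congrArg Matrix.transpose hRQ
      simpa [Matrix.transpose_mul, hRt, hSt, Matrix.mul_assoc] using this
    obtain ⟨W, hW⟩ : ∃ W : Matrix (Fin n ⊕ Fin r) (Fin r ⊕ Fin r) ℝ,
      W = Matrix.fromBlocks (P t) Q 0 0 := ⟨_, rfl⟩
    have hV : EntryDeriv 𝒱 W t := by
      intro i j
      simp only [h𝒱, hW]
      rcases i with i | i <;> rcases j with j | j
      · exact hX t i j
      · exact hP t i j
      · exact hasDerivAt_const _ _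
      · exact hasDerivAt_const _ _
    have hG := ((hV.transpose.mul (EntryDeriv.const Bc t)).mul hV).det
    have hD : (Wᵀ * Bc + (𝒱 t)ᵀ * (0 : Matrix (Fin n ⊕ Fin r) (Fin n ⊕ Fin r) ℝ)) * 𝒱 t +
        (𝒱 t)ᵀ * Bc * W =
        ((𝒱 t)ᵀ * Bc * 𝒱 t) * Matrix.fromBlocks 0 S 1 0 +
        Matrix.fromBlocks 0 1 S 0 * ((𝒱 t)ᵀ * Bc * 𝒱 t) := by
      rw [h𝒱, hB', hW]
      simp only [Matrix.fromBlocks_transpose, Matrix.fromBlocks_multiply, Matrix.fromBlocks_add,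
        Matrix.mul_zero, Matrix.zero_mul, Matrix.mul_one, Matrix.one_mul, add_zero, zero_add,
        Matrix.transpose_zero, Matrix.transpose_one, hQR]
      simp only [Matrix.mul_assoc, hRQ]
      have h2 := hc2 t
      rw [← eq_neg_iff_add_eq_zero] at h2
      congr 1
      · abel
      · simp only [Matrix.mul_add, hc1, Matrix.mul_assoc]
        abel
      · simp only [Matrix.add_mul, hc1, Matrix.mul_assoc]
        abel
      · simp only [Matrix.mul_add, Matrix.add_mul, Matrix.mul_assoc, h2]
        abel
    convert hG using 1
    rw [hD, Matrix.mul_add, Matrix.trace_add, ← Matrix.mul_assoc, Matrix.adjugate_mul,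
      Matrix.trace_mul_comm _ (_ * _), Matrix.mul_assoc (Matrix.fromBlocks _ _ _ _),
      Matrix.mul_adjugate]
    simp [Matrix.trace]
  intro t
  rw [tangent_iff_det _ _ hBs (hinj _)] at htan ⊢
  rw [← htan]
  exact is_const_of_deriv_eq_zero (fun s => (htr s).differentiableAt) (fun s => (htr s).deriv) t t₀
end

section
/- Let A = diag(a₁,…,aₙ), ε ∈ ℝ, and let e₁(t), e₂(t), p₁(t), p₂(t) be differentiable curves in ℝⁿ satisfying for all t the constraints (e_i, e_j) = δ_{ij} and (e_i, p_j) + (e_j, p_i) = 0 (i,j = 1,2), and the magnetic Neumann equations with the Euclidean metric on V_{n,2}: ė₁ = p₁, ė₂ = p₂, ṗ₁ = −Ae₁ + ((e₁,Ae₁) − (p₁,p₁) − ε(e₁,p₂))e₁ + ((e₁,Ae₂) − (p₁,p₂))e₂ + εp₂, ṗ₂ = −Ae₂ + ((e₁,Ae₂) − (p₁,p₂))e₁ + ((e₂,Ae₂) − (p₂,p₂) + ε(e₂,p₁))e₂ − εp₁. Then, with Φ_ε = p₁∧e₁ + p₂∧e₂ + ε·e₁∧e₂ and S = e₁⊗e₁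 + e₂⊗e₂, one has d/dt Φ_ε = [S, A] and d/dt S = [Φ_ε, S]; consequently for every real λ the Lax equation d/dt (λΦ_ε + S − λ²A) = [Φ_ε − λA, λΦ_ε + S − λ²A] holds. -/
open Matrix

/-- For the magnetic Neumann system with the Euclidean metric on V_{n,2},
the magnetic momentum Φ_ε = p₁∧e₁ + p₂∧e₂ + ε e₁∧e₂ and S = e₁⊗e₁ + e₂⊗e₂ satisfy
d/dt Φ_ε = [S, A], d/dt S = [Φ_ε, S], and hence the Lax equation
d/dt (λΦ_ε + S − λ²A) = [Φ_ε − λA, λΦ_ε + S − λ²A] for every real λ. -/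
theorem magnetic_neumann_lax {n : ℕ} (a : Fin n → ℝ)
    (A : Matrix (Fin n) (Fin n) ℝ) (hA : A = Matrix.diagonal a)
    (ε : ℝ) (e₁ e₂ p₁ p₂ : ℝ → Fin n → ℝ)
    (hc11 : ∀ t, e₁ t ⬝ᵥ e₁ t = 1) (hc22 : ∀ t, e₂ t ⬝ᵥ e₂ t = 1)
    (hc12 : ∀ t, e₁ t ⬝ᵥ e₂ t = 0)
    (hcp11 : ∀ t, e₁ t ⬝ᵥ p₁ t + e₁ t ⬝ᵥ p₁ t = 0)
    (hcp12 : ∀ t, e₁ t ⬝ᵥ p₂ t + e₂ t ⬝ᵥ p₁ t = 0)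
    (hcp22 : ∀ t, e₂ t ⬝ᵥ p₂ t + e₂ t ⬝ᵥ p₂ t = 0)
    (he₁ : ∀ t i, HasDerivAt (fun s => e₁ s i) (p₁ t i) t)
    (he₂ : ∀ t i, HasDerivAt (fun s => e₂ s i) (p₂ t i) t)
    (hp₁ : ∀ t i, HasDerivAt (fun s => p₁ s i)
      ((-(A *ᵥ e₁ t)
        + ((e₁ t ⬝ᵥ (A *ᵥ e₁ t)) - (p₁ t ⬝ᵥ p₁ t) - ε * (e₁ t ⬝ᵥ p₂ t)) • e₁ t
        + ((e₁ t ⬝ᵥ (A *ᵥ e₂ t)) - (p₁ t ⬝ᵥ p₂ t)) • e₂ t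
        + ε • p₂ t) i) t)
    (hp₂ : ∀ t i, HasDerivAt (fun s => p₂ s i)
      ((-(A *ᵥ e₂ t)
        + ((e₁ t ⬝ᵥ (A *ᵥ e₂ t)) - (p₁ t ⬝ᵥ p₂ t)) • e₁ t
        + ((e₂ t ⬝ᵥ (A *ᵥ e₂ t)) - (p₂ t ⬝ᵥ p₂ t) + ε * (e₂ t ⬝ᵥ p₁ t)) • e₂ t
        - ε • p₁ t) i) t)
    (Φε S : ℝ → Matrix (Fin n) (Fin n) ℝ)
    (hΦε : ∀ t, Φε t =
      (Matrix.vecMulVec (p₁ t) (e₁ t) - Matrix.vecMulVec (e₁ t) (p₁ t))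
      + (Matrix.vecMulVec (p₂ t) (e₂ t) - Matrix.vecMulVec (e₂ t) (p₂ t))
      + ε • (Matrix.vecMulVec (e₁ t) (e₂ t) - Matrix.vecMulVec (e₂ t) (e₁ t)))
    (hS : ∀ t, S t = Matrix.vecMulVec (e₁ t) (e₁ t) + Matrix.vecMulVec (e₂ t) (e₂ t)) :
    (∀ t i j, HasDerivAt (fun s => Φε s i j) ((S t * A - A * S t) i j) t) ∧
    (∀ t i j, HasDerivAt (fun s => S s i j) ((Φε t * S t - S t * Φε t) i j) t) ∧
    (∀ (lam : ℝ) (t : ℝ) (i j : Fin n),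
      HasDerivAt (fun s => (lam • Φε s + S s - lam ^ 2 • A) i j)
        (((Φε t - lam • A) * (lam • Φε t + S t - lam ^ 2 • A)
          - (lam • Φε t + S t - lam ^ 2 • A) * (Φε t - lam • A)) i j) t) := by
  have hΦ' : ∀ t i j, HasDerivAt (fun s => Φε s i j) ((S t * A - A * S t) i j) t := by
    intro t i j
    have hf : (fun s => Φε s i j) = fun s => (p₁ s i * e₁ s j - e₁ s i * p₁ s j)
        + (p₂ s i * e₂ s j - e₂ s i * p₂ s j)
        + ε * (e₁ s i * e₂ s j - e₂ s i * e₁ s j) := by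
      funext s
      simp [hΦε, Matrix.vecMulVec_apply]
    rw [hf]
    have h := ((((hp₁ t i).mul (he₁ t j)).sub ((he₁ t i).mul (hp₁ t j))).add
      (((hp₂ t i).mul (he₂ t j)).sub ((he₂ t i).mul (hp₂ t j)))).add
      ((((he₁ t i).mul (he₂ t j)).sub ((he₂ t i).mul (he₁ t j))).const_mul ε)
    refine h.congr_deriv ?_
    have hAi : ∀ (v : Fin n → ℝ) k, (A *ᵥ v) k = a k * v k := by
      intro v k
      rw [hA, Matrix.mulVec_diagonal]
    have hSA : (S t * A - A * S t) i j = S t i j * a j - a i * S t i j := by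
      rw [Matrix.sub_apply, hA, Matrix.mul_diagonal, Matrix.diagonal_mul]
    rw [hSA, hS]
    simp only [Pi.add_apply, Pi.sub_apply, Pi.neg_apply, Pi.smul_apply, smul_eq_mul, hAi,
      Matrix.add_apply, Matrix.vecMulVec_apply]
    ring
  have hS' : ∀ t i j, HasDerivAt (fun s => S s i j) ((Φε t * S t - S t * Φε t) i j) t := by
    intro t i j
    have hf : (fun s => S s i j) = fun s => e₁ s i * e₁ s j + e₂ s i * e₂ s j := by
      funext s
      simp [hS, Matrix.vecMulVec_apply]
    rw [hf]
    have h := ((he₁ t i).mul (he₁ t j)).add ((he₂ t i).mul (he₂ t j))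
    refine h.congr_deriv ?_
    have h11 : e₁ t ⬝ᵥ p₁ t = 0 := by linarith [hcp11 t]
    have h22 : e₂ t ⬝ᵥ p₂ t = 0 := by linarith [hcp22 t]
    have h21 : e₂ t ⬝ᵥ p₁ t = - (e₁ t ⬝ᵥ p₂ t) := by linarith [hcp12 t]
    have hc21 : e₂ t ⬝ᵥ e₁ t = 0 := by rw [dotProduct_comm]; exact hc12 t
    rw [hS, hΦε]
    simp only [add_mul, mul_add, sub_mul, mul_sub, smul_mul_assoc, mul_smul_comm,
      Matrix.vecMulVec_mul_vecMulVec, dotProduct_comm (p₁ t), dotProduct_comm (p₂ t),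
      hc11, hc22, hc12, hc21, h11, h22, h21, Matrix.add_apply, Matrix.sub_apply,
      Matrix.smul_apply, Matrix.vecMulVec_apply, Pi.smul_apply, smul_eq_mul]
    ring
  refine ⟨hΦ', hS', fun lam t i j => ?_⟩
  have h := (((hΦ' t i j).const_mul lam).add (hS' t i j)).sub_const (lam ^ 2 * A i j)
  refine h.congr_deriv ?_
  have key : (Φε t - lam • A) * (lam • Φε t + S t - lam ^ 2 • A)
      - (lam • Φε t + S t - lam ^ 2 • A) * (Φε t - lam • A)
      = lam • (S t * A - A * S t) + (Φε t * S t - S t * Φε t) := by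
    simp only [add_mul, mul_add, sub_mul, mul_sub, smul_mul_assoc, mul_smul_comm]
    module
  rw [key]
  simp only [Matrix.add_apply, Matrix.smul_apply, smul_eq_mul]
end
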